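/- arXiv:0706.3905 — 3 statements merged into one kernel-verified Lean document; each statement's English description precedes it below -/
import Mathlib

section
/- Let X be a locally path-connected Hausdorff topological space, let U be an open subset of ℝⁿ, and let f : X × U → ℝⁿ be continuous. Suppose that for every x ∈ X the map f_x : U → ℝⁿ defined by f_x(y) = f(x,y) is differentiable (not necessarily C¹) and without critical points, i.e. at every y ∈ U it has a Fréchet derivative that is a bijective linear map ℝⁿ → ℝⁿ. Fix (x₀, y₀) ∈ X × U and set z₀ = f(x₀, y₀). Then there exist a neighborhood V of x₀ in X and a function g : V → U, continuous on V, such that g(x₀) = y₀ and f(x, g(x)) = z₀ for all x ∈ V. -/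
/-!
A map `h` that is differentiable without critical points is a local homeomorphism. It is open, since
a positive minimum of `‖h a - z‖` over a compact neighbourhood cannot be attained in the interior,
so only local injectivity is at stake. If the set `S` of points where it fails were nonempty, the
Baire category theorem would give a compact neighbourhood `B` of a point of `S` on which no point of
`S ∩ B` shares its value with another point of `B`. Let `h a = h b = z` with `a, b ∈ B`, and let
`h x` be the point of `h (S ∩ B)` nearest to `z`. Over the open ball around `z` with `h x` on its
boundary, the restriction of `h` to `B` is a covering map. For a suitable point `w` of the ball near
`h x`, all preimages of `w` in `B` lie in a convex set determined by the derivative at `x`, and `h`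
maps this set into the ball. A covering map onto a ball is injective on connected sets, so `w` has
at most one preimage; hence all fibres over the ball have at most one point, and `a = b`.

For the implicit function, choose a compact neighbourhood `B` of `y₀` on which `f (x₀, ·)` is
injective. For `x` near `x₀` the map `f (x, ·)` is uniformly close to it on `B`, and the same
covering argument shows that `f (x, y) = z₀` has exactly one solution `y ∈ B`, which depends
continuously on `x` because `B` is compact.
-/

open Set Filter Topology Metric Asymptotics

section Topology

variable {E F : Type*} [TopologicalSpace E] [TopologicalSpace F]

lemma isPreconnected_preimage_subtypeVal {s t : Set E} (hs : IsPreconnected s) (hst : s ⊆ t) :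
    IsPreconnected ((↑) ⁻¹' s : Set t) := by
  rwa [← IsInducing.subtypeVal.isPreconnected_image, Subtype.image_preimage_coe,
    inter_eq_right.2 hst]

lemma isLocalHomeomorphOn_subtypeVal (B : Set E) :
    IsLocalHomeomorphOn ((↑) : B → E) ((↑) ⁻¹' interior B) := by
  refine (isLocalHomeomorphOn_iff_isOpenEmbedding_restrict _).2 fun b hb => ?_
  have hopen : IsOpen ((↑) ⁻¹' interior B : Set B) :=
    isOpen_interior.preimage continuous_subtype_val
  refine ⟨_, hopen.mem_nhds hb, IsEmbedding.subtypeVal.comp IsEmbedding.subtypeVal, ?_⟩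
  convert isOpen_interior (s := B)
  ext x
  constructor
  · rintro ⟨y, rfl⟩
    exact y.2
  · exact fun hx => ⟨⟨⟨x, interior_subset hx⟩, hx⟩, rfl⟩

lemma isCoveringMapOn_domRestrict_of_isCompact [T2Space E] [T2Space F] {h : E → F} {B : Set E}
    {W : Set F} (hB : IsCompact B) (hc : ContinuousOn h B)
    (hint : ∀ b ∈ B, h b ∈ W → B ∈ 𝓝 b) (hloc : IsLocalHomeomorphOn h (B ∩ h ⁻¹' W)) :
    IsCoveringMapOn (B.domRestrict h) W := by
  have : CompactSpace B := isCompact_iff_compactSpace.1 hB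
  refine .of_isLocalHomeomorphOn (continuousOn_iff_continuous_domRestrict.1 hc) ?_
  exact hloc.comp ((isLocalHomeomorphOn_subtypeVal B).mono fun b hb =>
    mem_interior_iff_mem_nhds.2 (hint b b.2 hb)) fun b hb => ⟨b.2, hb⟩

lemma eventually_forall_eq_imp_mem [T2Space F] {h : E → F} {B M : Set E} {x : E} {z : F}
    (hB : IsCompact B) (hc : ContinuousOn h B) (hfib : ∀ a ∈ B, h a = z → a = x)
    (hM : M ∈ 𝓝 x) : ∀ᶠ w in 𝓝 z, ∀ a ∈ B, h a = w → a ∈ M := by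
  have hcompact : IsCompact (h '' (B \ interior M)) :=
    (hB.diff isOpen_interior).image_of_continuousOn (hc.mono sdiff_subset)
  have hz : z ∉ h '' (B \ interior M) := by
    rintro ⟨a, ⟨haB, haM⟩, haz⟩
    exact haM (hfib a haB haz ▸ mem_interior_iff_mem_nhds.2 hM)
  filter_upwards [hcompact.isClosed.isOpen_compl.mem_nhds hz] with w hw a haB haw
  by_contra haM
  exact hw ⟨a, ⟨haB, fun ha => haM (interior_subset ha)⟩, haw⟩

lemma exists_forall_mem_ball_imp_mem_nhds {F : Type*} [MetricSpace F] {h : E → F} {B : Set E}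
    {x : E} (hB : IsCompact B) (hc : ContinuousOn h B) (hfib : ∀ a ∈ B, h a = h x → a = x)
    (hBx : B ∈ 𝓝 x) : ∃ ρ > 0, ∀ a ∈ B, h a ∈ ball (h x) ρ → B ∈ 𝓝 a := by
  obtain ⟨ρ, hρ, hsol⟩ := Metric.eventually_nhds_iff.1
    (eventually_forall_eq_imp_mem hB hc hfib (interior_mem_nhds.2 hBx))
  exact ⟨ρ, hρ, fun a ha hha => mem_interior_iff_mem_nhds.1 (hsol hha a ha rfl)⟩

end Topology

section Covering

variable {A Y : Type*} [TopologicalSpace A] [TopologicalSpace Y]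

lemma exists_section_of_isCoveringMapOn {p : A → Y} {W : Set Y} [SimplyConnectedSpace W]
    [LocallyPathConnectedSpace W] (hp : IsCoveringMapOn p W) {a : A} (ha : p a ∈ W) :
    ∃ s : C(W, A), (∀ w, p (s w) = w) ∧ s ⟨p a, ha⟩ = a := by
  obtain ⟨s, ⟨hsa, hs⟩, -⟩ := hp.existsUnique_continuousMap_lifts
    (⟨Subtype.val, continuous_subtype_val⟩ : C(W, Y)) (a₀ := ⟨p a, ha⟩) (e₀ := a) rfl (·.2)
  exact ⟨s, congr_fun hs, hsa⟩

/-- A section through one point of `P` retracts the whole of `P` onto the sheet of that point. -/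
lemma injOn_of_isPreconnected_of_isCoveringMap [SimplyConnectedSpace Y]
    [LocallyPathConnectedSpace Y] {q : A → Y} (hq : IsCoveringMap q) {P : Set A}
    (hP : IsPreconnected P) : InjOn q P := by
  intro a ha b hb hab
  obtain ⟨s, ⟨hsa, hs⟩, -⟩ := hq.existsUnique_continuousMap_lifts (.id Y) (q a) a rfl
  have hid : EqOn (s ∘ q) id P := by
    refine hq.eqOn_of_comp_eqOn hP (s.continuous.comp hq.continuous).continuousOn
      continuousOn_id (fun x _ => congr_fun hs (q x)) ha hsa
  calc a = s (q a) := hsa.symm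
    _ = s (q b) := by rw [hab]
    _ = b := hid hb

variable {p : A → Y} {W : Set Y} [SimplyConnectedSpace W] [LocallyPathConnectedSpace W]

lemma injOn_of_isPreconnected_of_isCoveringMapOn (hp : IsCoveringMapOn p W) {P : Set A}
    (hP : IsPreconnected P) (hPW : MapsTo p P W) : InjOn p P := by
  intro a ha b hb hab
  have hinj := injOn_of_isPreconnected_of_isCoveringMap hp.isCoveringMap_restrictPreimage
    (isPreconnected_preimage_subtypeVal hP hPW)
  exact congr_arg Subtype.val
    (hinj (x₁ := ⟨a, hPW ha⟩) (x₂ := ⟨b, hPW hb⟩) ha hb (Subtype.ext hab))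

lemma injOn_preimage_of_fiber_subsingleton (hp : IsCoveringMapOn p W) {w : Y} (hw : w ∈ W)
    (hfib : (p ⁻¹' {w}).Subsingleton) : InjOn p (p ⁻¹' W) := by
  intro a ha b hb hab
  obtain ⟨s, hs, hsa⟩ := exists_section_of_isCoveringMapOn hp ha
  obtain ⟨t, ht, htb⟩ := exists_section_of_isCoveringMapOn hp hb
  have hst : s ⟨w, hw⟩ = t ⟨w, hw⟩ := hfib (hs _) (ht _)
  have : s = t := (hp.existsUnique_continuousMap_lifts
    (⟨Subtype.val, continuous_subtype_val⟩ : C(W, Y)) (a₀ := ⟨w, hw⟩) (hs _) (·.2)).unique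
    ⟨rfl, funext hs⟩ ⟨hst.symm, funext ht⟩
  calc a = s ⟨p a, ha⟩ := hsa.symm
    _ = t ⟨p b, hb⟩ := by simp only [this, hab]
    _ = b := htb

lemma isPreconnected_preimage_of_isCoveringMapOn_of_injOn (hp : IsCoveringMapOn p W)
    (hinj : InjOn p (p ⁻¹' W)) : IsPreconnected (p ⁻¹' W) := by
  rcases (p ⁻¹' W).eq_empty_or_nonempty with hempty | ⟨a, ha⟩
  · rw [hempty]
    exact isPreconnected_empty
  obtain ⟨s, hs, -⟩ := exists_section_of_isCoveringMapOn hp ha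
  have hsW : ∀ w, s w ∈ p ⁻¹' W := fun w => by
    rw [mem_preimage, hs w]
    exact w.2
  have hrange : range s = p ⁻¹' W := Subset.antisymm (range_subset_iff.2 hsW)
    fun b hb => ⟨⟨p b, hb⟩, hinj (hsW _) hb (hs _)⟩
  exact hrange ▸ isPreconnected_range s.continuous

end Covering

section Derivative

variable {E F : Type*} [NormedAddCommGroup E] [NormedSpace ℝ E] [NormedAddCommGroup F]
  [NormedSpace ℝ F] {h : E → F} {D : E →L[ℝ] F} {x : E}

/-- Moving `x` in the direction that `D` sends to `z - h x` would bring `h` closer to `z`. -/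
lemma eq_of_isLocalMin_norm_sub {z : F} (hD : HasFDerivAt h D x) (hsurj : Function.Surjective D)
    (hmin : IsLocalMin (fun a => ‖h a - z‖) x) : h x = z := by
  by_contra hne
  have hpos : 0 < ‖h x - z‖ := norm_pos_iff.2 (sub_ne_zero.2 hne)
  obtain ⟨v, hv⟩ := hsurj (z - h x)
  have hline : HasDerivAt (fun t : ℝ => h (x + t • v)) (z - h x) 0 := by
    have hD' : HasFDerivAt h D (x + (0 : ℝ) • v) := by simpa using hD
    have hl : HasDerivAt (fun t : ℝ => x + t • v) v 0 := by
      simpa using ((hasDerivAt_id (0 : ℝ)).smul_const v).const_add x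
    exact hv ▸ hD'.comp_hasDerivAt (0 : ℝ) hl
  have htendsto : Tendsto (fun t : ℝ => x + t • v) (𝓝 0) (𝓝 x) :=
    Continuous.tendsto' (by fun_prop) _ _ (by simp)
  have hsmall := hline.isLittleO.def (c := ‖h x - z‖ / 2) (by positivity)
  obtain ⟨t, ⟨hmin_t, hsmall_t⟩, ht0, ht1⟩ :=
    ((((htendsto.eventually hmin).and hsmall).filter_mono nhdsWithin_le_nhds).and
      (Ioo_mem_nhdsGT (zero_lt_one' ℝ))).exists
  simp only [zero_smul, add_zero, sub_zero, Real.norm_of_nonneg ht0.le] at hsmall_t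
  have hlt : ‖h (x + t • v) - z‖ < ‖h x - z‖ := calc
    ‖h (x + t • v) - z‖
        = ‖(1 - t) • (h x - z) + (h (x + t • v) - h x - t • (z - h x))‖ := by
      congr 1; module
    _ ≤ (1 - t) * ‖h x - z‖ + ‖h x - z‖ / 2 * t := by
      refine (norm_add_le _ _).trans (add_le_add ?_ hsmall_t)
      rw [norm_smul, Real.norm_of_nonneg (by linarith)]
    _ < ‖h x - z‖ := by nlinarith
  exact hlt.not_ge hmin_t

variable [FiniteDimensional ℝ E]

lemma isBigO_sub_apply_of_injective (hinj : Function.Injective D) (l : Filter E) (x : E) :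
    (fun a => a - x) =O[l] fun a => D (a - x) := by
  obtain ⟨K, -, hK⟩ := (LinearMap.injective_iff_antilipschitz (D : E →ₗ[ℝ] F)).1 hinj
  exact .of_bound K (.of_forall fun a => by simpa using hK.le_mul_dist (a - x) 0)

lemma isEquivalent_apply_of_hasFDerivAt_of_injective (hD : HasFDerivAt h D x)
    (hinj : Function.Injective D) : (fun a => h a - h x) ~[𝓝 x] fun a => D (a - x) :=
  hD.isLittleO.trans_isBigO (isBigO_sub_apply_of_injective hinj _ x)

lemma exists_dist_le_mul_dist_of_hasFDerivAt_of_injective (hD : HasFDerivAt h D x)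
    (hinj : Function.Injective D) : ∃ C, ∀ᶠ a in 𝓝 x, dist a x ≤ C * dist (h a) (h x) := by
  simp only [dist_eq_norm]
  exact ((isBigO_sub_apply_of_injective hinj _ x).trans
    (isEquivalent_apply_of_hasFDerivAt_of_injective hD hinj).isBigO_symm).bound

end Derivative

section LinearizedBall

variable {E F : Type*} [NormedAddCommGroup E] [NormedSpace ℝ E] [NormedAddCommGroup F]
  [NormedSpace ℝ F]

/-- The points whose displacement from `x` is sent by `D` into a ball around `ε • ν` of radius
proportional to `ε`. When `D` is the derivative of `h` at `x`, this is a convex set that contains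
the solutions of `h a = h x + ε • ν` near `x`, and that `h` maps into the ball with centre
`h x + ν` and radius `‖ν‖`. -/
def linearizedBall (D : E →L[ℝ] F) (x : E) (ν : F) (ε : ℝ) : Set E :=
  {a | ‖D (a - x) - ε • ν‖ ≤ ε * ‖ν‖ / 2}

variable {h : E → F} {D : E →L[ℝ] F} {x : E} {ν : F} {ε : ℝ}

lemma convex_linearizedBall : Convex ℝ (linearizedBall D x ν ε) := by
  have : linearizedBall D x ν ε =
      (fun a => -x + a) ⁻¹' (D ⁻¹' closedBall (ε • ν) (ε * ‖ν‖ / 2)) := by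
    ext a
    simp [linearizedBall, dist_eq_norm, sub_eq_neg_add]
  rw [this]
  exact ((convex_closedBall _ _).is_linear_preimage D.isBoundedLinearMap.toIsLinearMap
    ).translate_preimage_right (-x)

lemma norm_apply_sub_le_of_mem_linearizedBall {a : E} (hε : 0 ≤ ε)
    (ha : a ∈ linearizedBall D x ν ε) : ‖D (a - x)‖ ≤ 3 / 2 * (ε * ‖ν‖) := calc
  ‖D (a - x)‖ ≤ ‖D (a - x) - ε • ν‖ + ‖ε • ν‖ := by
    simpa using norm_add_le (D (a - x) - ε • ν) (ε • ν)
  _ ≤ ε * ‖ν‖ / 2 + ε * ‖ν‖ := by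
    gcongr
    · exact ha
    · rw [norm_smul, Real.norm_of_nonneg hε]
  _ = 3 / 2 * (ε * ‖ν‖) := by ring

lemma eventually_linearizedBall_subset [FiniteDimensional ℝ E] (hinj : Function.Injective D)
    (ν : F) {N : Set E} (hN : N ∈ 𝓝 x) : ∀ᶠ ε in 𝓝[>] (0 : ℝ), linearizedBall D x ν ε ⊆ N := by
  obtain ⟨C, hC, hbound⟩ := (isBigO_sub_apply_of_injective hinj ⊤ x).exists_pos
  obtain ⟨δ, hδ, hδN⟩ := Metric.mem_nhds_iff.1 hN
  have hsmall : ∀ᶠ ε in 𝓝 (0 : ℝ), C * (3 / 2 * (ε * ‖ν‖)) < δ :=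
    ContinuousAt.eventually_lt (by fun_prop) continuousAt_const (by simpa)
  filter_upwards [hsmall.filter_mono nhdsWithin_le_nhds, self_mem_nhdsWithin] with ε hε hε0 a ha
  refine hδN ?_
  rw [mem_ball, dist_eq_norm]
  calc ‖a - x‖ ≤ C * ‖D (a - x)‖ := eventually_top.1 hbound.bound a
    _ ≤ C * (3 / 2 * (ε * ‖ν‖)) := by
      gcongr
      exact norm_apply_sub_le_of_mem_linearizedBall (le_of_lt hε0) ha
    _ < δ := hε

lemma mem_ball_of_mem_linearizedBall {a : E} (hν : ν ≠ 0) (hε0 : 0 < ε) (hε1 : ε ≤ 1)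
    (happrox : ‖h a - h x - D (a - x)‖ ≤ 1 / 4 * ‖D (a - x)‖)
    (ha : a ∈ linearizedBall D x ν ε) : h a ∈ ball (h x + ν) ‖ν‖ := by
  have hpos : 0 < ε * ‖ν‖ := mul_pos hε0 (norm_pos_iff.2 hν)
  rw [mem_ball, dist_eq_norm]
  calc ‖h a - (h x + ν)‖
      = ‖(h a - h x - D (a - x)) + (D (a - x) - ε • ν) + -((1 - ε) • ν)‖ := by
        congr 1; module
    _ ≤ 1 / 4 * (3 / 2 * (ε * ‖ν‖)) + ε * ‖ν‖ / 2 + (1 - ε) * ‖ν‖ := by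
        refine norm_add₃_le.trans (add_le_add (add_le_add ?_ ha) ?_)
        · refine happrox.trans ?_
          gcongr
          exact norm_apply_sub_le_of_mem_linearizedBall hε0.le ha
        · rw [norm_neg, norm_smul, Real.norm_of_nonneg (by linarith)]
    _ < ‖ν‖ := by linarith

lemma mem_linearizedBall_of_eq {a : E} (hε : 0 ≤ ε)
    (happrox : ‖h a - h x - D (a - x)‖ ≤ 1 / 4 * ‖D (a - x)‖) (ha : h a = h x + ε • ν) :
    a ∈ linearizedBall D x ν ε := by
  rw [ha, add_sub_cancel_left] at happrox
  have htriangle : ‖D (a - x)‖ ≤ ‖ε • ν‖ + ‖ε • ν - D (a - x)‖ := by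
    simpa using norm_sub_le (ε • ν) (ε • ν - D (a - x))
  have hnorm : ‖ε • ν‖ = ε * ‖ν‖ := by rw [norm_smul, Real.norm_of_nonneg hε]
  have hpos : 0 ≤ ε * ‖ν‖ := by positivity
  change ‖D (a - x) - ε • ν‖ ≤ ε * ‖ν‖ / 2
  rw [norm_sub_rev]
  linarith

end LinearizedBall

section Touching

variable {E F : Type*} [NormedAddCommGroup E] [NormedSpace ℝ E] [FiniteDimensional ℝ E]
  [NormedAddCommGroup F] [NormedSpace ℝ F] {h : E → F} {D : E →L[ℝ] F} {x : E} {B : Set E}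

lemma exists_convex_of_hasFDerivAt_of_injective (hB : IsCompact B) (hc : ContinuousOn h B)
    (hBx : B ∈ 𝓝 x) (hfib : ∀ a ∈ B, h a = h x → a = x) (hD : HasFDerivAt h D x)
    (hinj : Function.Injective D) {ν : F} (hν : ν ≠ 0) :
    ∃ w ∈ ball (h x + ν) ‖ν‖, ∃ K ⊆ B, Convex ℝ K ∧ MapsTo h K (ball (h x + ν) ‖ν‖) ∧
      ∀ a ∈ B, h a = w → a ∈ K := by
  let N : Set E := B ∩ {a | ‖h a - h x - D (a - x)‖ ≤ 1 / 4 * ‖D (a - x)‖}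
  have hN : N ∈ 𝓝 x := inter_mem hBx
    ((isEquivalent_apply_of_hasFDerivAt_of_injective hD hinj).isLittleO.def (by norm_num))
  have hsub : ∀ᶠ ε in 𝓝[>] (0 : ℝ), linearizedBall D x ν ε ⊆ N :=
    eventually_linearizedBall_subset hinj ν hN
  have hsol : ∀ᶠ ε in 𝓝[>] (0 : ℝ), ∀ a ∈ B, h a = h x + ε • ν → a ∈ N := by
    have htendsto : Tendsto (fun ε : ℝ => h x + ε • ν) (𝓝 0) (𝓝 (h x)) :=
      Continuous.tendsto' (by fun_prop) _ _ (by simp)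
    exact (htendsto.eventually (eventually_forall_eq_imp_mem hB hc hfib hN)).filter_mono
      nhdsWithin_le_nhds
  obtain ⟨ε, ⟨hsub, hsol⟩, hε0, hε1⟩ :=
    ((hsub.and hsol).and (Ioo_mem_nhdsGT (zero_lt_one' ℝ))).exists
  refine ⟨h x + ε • ν, ?_, linearizedBall D x ν ε, fun a ha => (hsub ha).1, convex_linearizedBall,
    fun a ha => mem_ball_of_mem_linearizedBall hν hε0 hε1.le (hsub ha).2 ha,
    fun a ha haw => mem_linearizedBall_of_eq hε0.le (hsol a ha haw).2 haw⟩
  rw [mem_ball, dist_eq_norm, show h x + ε • ν - (h x + ν) = -((1 - ε) • ν) by module, norm_neg,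
    norm_smul, Real.norm_of_nonneg (by linarith)]
  exact mul_lt_of_lt_one_left (norm_pos_iff.2 hν) (by linarith)

lemma injOn_inter_preimage_ball_of_isCoveringMapOn (hB : IsCompact B) (hc : ContinuousOn h B)
    (hBx : B ∈ 𝓝 x) (hfib : ∀ a ∈ B, h a = h x → a = x) (hD : HasFDerivAt h D x)
    (hinj : Function.Injective D) {z : F} (hz : z ≠ h x)
    (hcov : IsCoveringMapOn (B.domRestrict h) (ball z (dist z (h x)))) :
    InjOn h (B ∩ h ⁻¹' ball z (dist z (h x))) := by
  have hpos : 0 < dist z (h x) := dist_pos.2 hz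
  have := contractibleSpace_ball (x := z) hpos
  have := (isOpen_ball (x := z) (ε := dist z (h x))).locallyPathConnectedSpace
  obtain ⟨w, hw, K, hKB, hK, hKz, hwK⟩ :=
    exists_convex_of_hasFDerivAt_of_injective hB hc hBx hfib hD hinj (sub_ne_zero.2 hz)
  rw [add_sub_cancel, ← dist_eq_norm] at hw hKz
  have hinjK : InjOn (B.domRestrict h) ((↑) ⁻¹' K) :=
    injOn_of_isPreconnected_of_isCoveringMapOn hcov
      (isPreconnected_preimage_subtypeVal hK.isPreconnected hKB) fun a ha => hKz ha
  have hsub : ((B.domRestrict h) ⁻¹' {w}).Subsingleton := fun a ha b hb =>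
    hinjK (hwK a a.2 ha) (hwK b b.2 hb) (ha.trans hb.symm)
  intro a ha b hb hab
  exact congr_arg Subtype.val (injOn_preimage_of_fiber_subsingleton hcov hw hsub
    (x₁ := ⟨a, ha.1⟩) (x₂ := ⟨b, hb.1⟩) ha.2 hb.2 hab)

end Touching

section Baire

variable {X Y : Type*} [PseudoMetricSpace X] [PseudoMetricSpace Y] {h : X → Y} {S : Set X}

lemma isClosed_setOf_forall_dist_le_mul_dist (hc : ContinuousOn h S) (δ C : ℝ) :
    IsClosed {x : S | ∀ x' : X, dist x' x < δ → dist x' x ≤ C * dist (h x') (h x)} := by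
  have hc' : Continuous fun x : S => h x := continuousOn_iff_continuous_domRestrict.1 hc
  simp only [ofPred_forall]
  exact isClosed_iInter fun x' => isClosed_imp (isOpen_lt (by fun_prop) continuous_const)
    (isClosed_le (by fun_prop) (continuous_const.mul (continuous_const.dist hc')))

lemma exists_nat_forall_dist_le_mul_dist {x : X} {C : ℝ}
    (hx : ∀ᶠ x' in 𝓝 x, dist x' x ≤ C * dist (h x') (h x)) :
    ∃ j : ℕ, ∀ x', dist x' x < 1 / ((j : ℝ) + 1) → dist x' x ≤ j * dist (h x') (h x) := by
  obtain ⟨δ, hδ, hball⟩ := Metric.mem_nhds_iff.1 hx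
  obtain ⟨j, hjC, hjδ⟩ := ((tendsto_natCast_atTop_atTop.eventually_ge_atTop C).and
    (tendsto_one_div_add_atTop_nhds_zero_nat.eventually_lt_const hδ)).exists
  refine ⟨j, fun x' hx' => (hball (hx'.trans hjδ)).trans ?_⟩
  gcongr

lemma exists_nhds_forall_dist_le_mul_dist [BaireSpace S] (hS : S.Nonempty)
    (hc : ContinuousOn h S)
    (hbound : ∀ x ∈ S, ∃ C, ∀ᶠ x' in 𝓝 x, dist x' x ≤ C * dist (h x') (h x)) :
    ∃ x₁ ∈ S, ∃ C : ℝ, ∃ N ∈ 𝓝 x₁, ∀ x ∈ S ∩ N, ∀ x' ∈ N, dist x' x ≤ C * dist (h x') (h x) := by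
  have : Nonempty S := hS.to_subtype
  let A : ℕ → Set S := fun j =>
    {x | ∀ x' : X, dist x' x < 1 / ((j : ℝ) + 1) → dist x' x ≤ j * dist (h x') (h x)}
  have hcover : ⋃ j, A j = univ := eq_univ_of_forall fun x => mem_iUnion.2
    ((hbound x x.2).elim fun _ => exists_nat_forall_dist_le_mul_dist)
  obtain ⟨j, x₁, hx₁⟩ := nonempty_interior_of_iUnion_of_closed
    (fun j => isClosed_setOf_forall_dist_le_mul_dist hc _ _) hcover
  obtain ⟨M, hM, hMA⟩ := mem_nhds_subtype_iff_nhdsWithin.1 (mem_interior_iff_mem_nhds.1 hx₁)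
    |> mem_nhdsWithin_iff_exists_mem_nhds_inter.1
  refine ⟨x₁, x₁.2, j, M ∩ ball x₁ (1 / ((j : ℝ) + 1) / 2),
    inter_mem hM (ball_mem_nhds _ (by positivity)), ?_⟩
  rintro x ⟨hxS, hxM, hx⟩ x' ⟨-, hx'⟩
  obtain ⟨y, hyA, rfl⟩ := hMA ⟨hxM, hxS⟩
  exact hyA x' ((dist_triangle_right x' y x₁).trans_lt (by
    rw [mem_ball] at hx hx'
    linarith))

end Baire

/-- The map `h` is differentiable at every point of `U`, with bijective derivative: it is
differentiable without critical points on `U`. The derivative need not be continuous in the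
point. -/
def HasBijectiveFDerivOn {E F : Type*} [NormedAddCommGroup E] [NormedSpace ℝ E]
    [NormedAddCommGroup F] [NormedSpace ℝ F] (h : E → F) (U : Set E) : Prop :=
  ∀ y ∈ U, ∃ D : E →L[ℝ] F, HasFDerivAt h D y ∧ Function.Bijective D

/-- The set of points at which `h` is locally injective. For an open continuous map, these are the
points at which it is a local homeomorphism. -/
def locallyInjectiveLocus {E F : Type*} [TopologicalSpace E] (h : E → F) : Set E :=
  {y | ∃ O ∈ 𝓝 y, InjOn h O}

lemma isOpen_locallyInjectiveLocus {E F : Type*} [TopologicalSpace E] (h : E → F) :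
    IsOpen (locallyInjectiveLocus h) := by
  rw [isOpen_iff_mem_nhds]
  rintro y ⟨O, hO, hinj⟩
  filter_upwards [eventually_mem_nhds_iff.2 hO] with y' hy'
  exact ⟨O, hy', hinj⟩

namespace HasBijectiveFDerivOn

variable {E F : Type*} [NormedAddCommGroup E] [NormedSpace ℝ E] [NormedAddCommGroup F]
  [NormedSpace ℝ F] {h : E → F} {U B : Set E} {y : E}

lemma mono {V : Set E} (hh : HasBijectiveFDerivOn h U) (hVU : V ⊆ U) :
    HasBijectiveFDerivOn h V :=
  fun y hy => hh y (hVU hy)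

lemma continuousOn (hh : HasBijectiveFDerivOn h U) : ContinuousOn h U := fun y hy =>
  have ⟨_, hD, _⟩ := hh y hy
  hD.continuousAt.continuousWithinAt

variable [FiniteDimensional ℝ E]

lemma exists_dist_le_mul_dist (hh : HasBijectiveFDerivOn h U) (hy : y ∈ U) :
    ∃ C, ∀ᶠ a in 𝓝 y, dist a y ≤ C * dist (h a) (h y) :=
  have ⟨_, hD, hbij⟩ := hh y hy
  exists_dist_le_mul_dist_of_hasFDerivAt_of_injective hD hbij.injective

lemma eventually_eq_imp_eq (hh : HasBijectiveFDerivOn h U) (hy : y ∈ U) :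
    ∀ᶠ a in 𝓝 y, h a = h y → a = y := by
  obtain ⟨C, hC⟩ := hh.exists_dist_le_mul_dist hy
  filter_upwards [hC] with a ha heq
  rw [heq, dist_self, mul_zero] at ha
  exact dist_le_zero.1 ha

lemma image_mem_nhds (hh : HasBijectiveFDerivOn h U) (hU : U ∈ 𝓝 y) : h '' U ∈ 𝓝 (h y) := by
  obtain ⟨B, hBy, hBsub, hB⟩ := local_compact_nhds
    (inter_mem hU (hh.eventually_eq_imp_eq (mem_of_mem_nhds hU)))
  have hBU : B ⊆ U := fun a ha => (hBsub ha).1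
  have hc : ContinuousOn h B := hh.continuousOn.mono hBU
  obtain ⟨ε, hε, hint⟩ :=
    exists_forall_mem_ball_imp_mem_nhds hB hc (fun a ha => (hBsub ha).2) hBy
  filter_upwards [ball_mem_nhds (h y) (half_pos hε)] with w hw
  obtain ⟨a, haB, hmin⟩ : ∃ a ∈ B, IsMinOn (fun a => ‖h a - w‖) B a :=
    hB.exists_isMinOn ⟨y, mem_of_mem_nhds hBy⟩ (hc.sub continuousOn_const).norm
  have hclose : dist (h a) w ≤ dist w (h y) := by
    simpa only [dist_eq_norm, norm_sub_rev w] using isMinOn_iff.1 hmin y (mem_of_mem_nhds hBy)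
  have haε : h a ∈ ball (h y) ε := by
    rw [mem_ball] at hw ⊢
    linarith [dist_triangle (h a) w (h y)]
  obtain ⟨D, hD, hbij⟩ := hh a (hBU haB)
  exact ⟨a, hBU haB,
    eq_of_isLocalMin_norm_sub hD hbij.surjective (hmin.isLocalMin (hint a haB haε))⟩

lemma isOpen_image (hh : HasBijectiveFDerivOn h U) (hU : IsOpen U) : IsOpen (h '' U) := by
  rw [isOpen_iff_mem_nhds]
  rintro _ ⟨y, hy, rfl⟩
  exact hh.image_mem_nhds (hU.mem_nhds hy)

lemma isLocalHomeomorphOn_inter_locallyInjectiveLocus (hh : HasBijectiveFDerivOn h U)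
    (hU : IsOpen U) : IsLocalHomeomorphOn h (U ∩ locallyInjectiveLocus h) := by
  rw [isLocalHomeomorphOn_iff_isOpenEmbedding_restrict]
  rintro y ⟨hyU, O, hO, hinj⟩
  have hopen : IsOpen (interior O ∩ U) := isOpen_interior.inter hU
  refine ⟨interior O ∩ U, inter_mem (interior_mem_nhds.2 hO) (hU.mem_nhds hyU),
    .of_continuous_injective_isOpenMap ?_ ?_ fun t ht => ?_⟩
  · exact continuousOn_iff_continuous_domRestrict.1 (hh.continuousOn.mono inter_subset_right)
  · exact injOn_iff_injective.1 (hinj.mono fun a ha => interior_subset ha.1)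
  · rw [domRestrict_eq, image_comp]
    refine (hh.mono ?_).isOpen_image (hopen.isOpenMap_subtype_val t ht)
    rintro _ ⟨a, -, rfl⟩
    exact a.2.2

lemma injOn_inter_preimage_ball_of_nearest (hh : HasBijectiveFDerivOn h U) (hU : IsOpen U)
    (hB : IsCompact B) (hBU : B ⊆ U) {x : E} (hx : x ∈ B) (hfib : ∀ a ∈ B, h a = h x → a = x)
    {z : F} (hz : z ≠ h x) (hint : ∀ a ∈ B, h a ∈ closedBall z (dist z (h x)) → B ∈ 𝓝 a)
    (hnear : ∀ a ∈ B \ locallyInjectiveLocus h, dist z (h x) ≤ dist z (h a)) :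
    InjOn h (B ∩ h ⁻¹' ball z (dist z (h x))) := by
  have hc : ContinuousOn h B := hh.continuousOn.mono hBU
  have hcov : IsCoveringMapOn (B.domRestrict h) (ball z (dist z (h x))) := by
    refine isCoveringMapOn_domRestrict_of_isCompact hB hc
      (fun a ha har => hint a ha (ball_subset_closedBall har))
      ((hh.isLocalHomeomorphOn_inter_locallyInjectiveLocus hU).mono ?_)
    rintro a ⟨ha, har⟩
    refine ⟨hBU ha, ?_⟩
    by_contra hal
    exact (mem_ball'.1 har).not_ge (hnear a ⟨ha, hal⟩)
  have hBx : B ∈ 𝓝 x := hint x hx (mem_closedBall'.2 le_rfl)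
  obtain ⟨D, hD, hbij⟩ := hh x (hBU hx)
  exact injOn_inter_preimage_ball_of_isCoveringMapOn hB hc hBx hfib hD hbij.injective hz hcov

lemma mem_locallyInjectiveLocus_of_isCompact (hh : HasBijectiveFDerivOn h U) (hU : IsOpen U)
    (hB : IsCompact B) (hBU : B ⊆ U) {x₁ : E} (hBx₁ : B ∈ 𝓝 x₁)
    (hfib : ∀ x ∈ B \ locallyInjectiveLocus h, ∀ a ∈ B, h a = h x → a = x) :
    x₁ ∈ locallyInjectiveLocus h := by
  by_contra hx₁
  have hx₁B : x₁ ∈ B \ locallyInjectiveLocus h := ⟨mem_of_mem_nhds hBx₁, hx₁⟩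
  have hc : ContinuousOn h B := hh.continuousOn.mono hBU
  obtain ⟨ρ, hρ, hint⟩ := exists_forall_mem_ball_imp_mem_nhds hB hc (hfib x₁ hx₁B) hBx₁
  refine hx₁ ⟨B ∩ h ⁻¹' ball (h x₁) (ρ / 2), inter_mem hBx₁
    ((hc.continuousAt hBx₁).preimage_mem_nhds (ball_mem_nhds _ (half_pos hρ))), ?_⟩
  rintro a ⟨ha, haρ⟩ b ⟨hb, -⟩ hab
  rw [mem_preimage, mem_ball] at haρ
  obtain ⟨x₂, hx₂, hnear⟩ : ∃ x₂ ∈ B \ locallyInjectiveLocus h,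
      IsMinOn (fun x => dist (h a) (h x)) (B \ locallyInjectiveLocus h) x₂ :=
    (hB.diff (isOpen_locallyInjectiveLocus h)).exists_isMinOn ⟨x₁, hx₁B⟩
      (continuous_const.dist continuous_id |>.comp_continuousOn (hc.mono sdiff_subset))
  by_cases hax₂ : h a = h x₂
  · rw [hfib x₂ hx₂ a ha hax₂, hfib x₂ hx₂ b hb (hab.symm.trans hax₂)]
  have hsub : closedBall (h a) (dist (h a) (h x₂)) ⊆ ball (h x₁) ρ :=
    closedBall_subset_ball' (by linarith [isMinOn_iff.1 hnear x₁ hx₁B])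
  have hra : h a ∈ ball (h a) (dist (h a) (h x₂)) := mem_ball_self (dist_pos.2 hax₂)
  exact hh.injOn_inter_preimage_ball_of_nearest hU hB hBU hx₂.1 (hfib x₂ hx₂) hax₂
    (fun c hcB hcr => hint c hcB (hsub hcr)) (isMinOn_iff.1 hnear) ⟨ha, hra⟩
    ⟨hb, by rwa [mem_preimage, ← hab]⟩ hab

theorem subset_locallyInjectiveLocus (hh : HasBijectiveFDerivOn h U) (hU : IsOpen U) :
    U ⊆ locallyInjectiveLocus h := by
  by_contra hsub
  have hG := isOpen_locallyInjectiveLocus h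
  have : BaireSpace (U \ locallyInjectiveLocus h : Set E) :=
    (hU.isGδ.inter hG.isClosed_compl.isGδ).baireSpace_of_t2Space_locallyCompactSpace
  obtain ⟨x₁, ⟨hx₁U, hx₁⟩, C, N, hN, hbound⟩ :=
    exists_nhds_forall_dist_le_mul_dist (sdiff_nonempty.2 hsub)
      (hh.continuousOn.mono sdiff_subset) fun x hx => hh.exists_dist_le_mul_dist hx.1
  obtain ⟨B, hBx₁, hBsub, hB⟩ := local_compact_nhds (inter_mem hN (hU.mem_nhds hx₁U))
  refine hx₁ (hh.mem_locallyInjectiveLocus_of_isCompact hU hB (fun a ha => (hBsub ha).2) hBx₁ ?_)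
  rintro x ⟨hxB, hx⟩ a ha heq
  have hdist := hbound x ⟨⟨(hBsub hxB).2, hx⟩, (hBsub hxB).1⟩ a (hBsub ha).1
  rw [heq, dist_self, mul_zero] at hdist
  exact dist_le_zero.1 hdist

theorem isLocalHomeomorphOn (hh : HasBijectiveFDerivOn h U) (hU : IsOpen U) :
    IsLocalHomeomorphOn h U :=
  (hh.isLocalHomeomorphOn_inter_locallyInjectiveLocus hU).mono fun _ hy =>
    ⟨hy, hh.subset_locallyInjectiveLocus hU hy⟩

end HasBijectiveFDerivOn

section Perturbation

variable {E F : Type*} [TopologicalSpace E] [T2Space E] [NormedAddCommGroup F] {h₀ h : E → F}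
  {B : Set E} {ρ : ℝ}

lemma isCoveringMapOn_ball_of_forall_dist_lt {z : F} (hB : IsCompact B)
    (hloc : IsLocalHomeomorphOn h B) (hint : ∀ y ∈ B, h₀ y ∈ ball z ρ → B ∈ 𝓝 y)
    (hclose : ∀ y ∈ B, dist (h y) (h₀ y) < ρ / 4) :
    IsCoveringMapOn (B.domRestrict h) (ball z (3 * ρ / 4)) := by
  refine isCoveringMapOn_domRestrict_of_isCompact hB hloc.continuousOn (fun y hy hyρ => ?_)
    (hloc.mono inter_subset_left)
  rw [mem_ball] at hyρ
  refine hint y hy (mem_ball.2 ?_)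
  linarith [hclose y hy, dist_triangle_left (h₀ y) z (h y)]

variable [NormedSpace ℝ F] {y₀ : E}

lemma exists_eq_of_forall_dist_lt (hB : IsCompact B) (hloc : IsLocalHomeomorphOn h B)
    (hy₀ : y₀ ∈ B) (hint : ∀ y ∈ B, h₀ y ∈ ball (h₀ y₀) ρ → B ∈ 𝓝 y)
    (hclose : ∀ y ∈ B, dist (h y) (h₀ y) < ρ / 4) : ∃ y ∈ B, h y = h₀ y₀ := by
  have hρ : 0 < ρ / 4 := dist_nonneg.trans_lt (hclose y₀ hy₀)
  have := contractibleSpace_ball (x := h₀ y₀) (r := 3 * ρ / 4) (by linarith)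
  have := (isOpen_ball (x := h₀ y₀) (ε := 3 * ρ / 4)).locallyPathConnectedSpace
  have hy₀ρ : h y₀ ∈ ball (h₀ y₀) (3 * ρ / 4) :=
    mem_ball.2 ((hclose y₀ hy₀).trans (by linarith))
  obtain ⟨s, hs, -⟩ := exists_section_of_isCoveringMapOn
    (isCoveringMapOn_ball_of_forall_dist_lt hB hloc hint hclose) (a := ⟨y₀, hy₀⟩) hy₀ρ
  let c : ball (h₀ y₀) (3 * ρ / 4) := ⟨h₀ y₀, mem_ball_self (by linarith)⟩
  exact ⟨s c, (s c).2, hs c⟩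

/-- The solutions lie in the preimage of a ball under `h₀`, which is connected because `h₀` is
injective, and `h` is injective on connected sets. -/
lemma eq_of_forall_dist_lt (hB : IsCompact B) (hloc₀ : IsLocalHomeomorphOn h₀ B)
    (hinj : InjOn h₀ B) (hloc : IsLocalHomeomorphOn h B) {z : F}
    (hint : ∀ y ∈ B, h₀ y ∈ ball z ρ → B ∈ 𝓝 y)
    (hclose : ∀ y ∈ B, dist (h y) (h₀ y) < ρ / 4) {y y' : E} (hy : y ∈ B) (hy' : y' ∈ B)
    (hyz : h y = z) (hyz' : h y' = z) : y = y' := by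
  have hρ : 0 < ρ / 4 := dist_nonneg.trans_lt (hclose y hy)
  have := contractibleSpace_ball (x := z) (r := ρ / 2) (by linarith)
  have := contractibleSpace_ball (x := z) (r := 3 * ρ / 4) (by linarith)
  have := fun r => (isOpen_ball (x := z) (ε := r)).locallyPathConnectedSpace
  let P : Set B := B.domRestrict h₀ ⁻¹' ball z (ρ / 2)
  have hP : IsPreconnected P := by
    have hcov₀ : IsCoveringMapOn (B.domRestrict h₀) (ball z (3 * ρ / 4)) :=
      isCoveringMapOn_ball_of_forall_dist_lt hB hloc₀ hint fun y _ => by rwa [dist_self]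
    exact isPreconnected_preimage_of_isCoveringMapOn_of_injOn
      (hcov₀.mono (ball_subset_ball (by linarith))) (injOn_iff_injective.1 hinj).injOn
  have hmaps : MapsTo (B.domRestrict h) P (ball z (3 * ρ / 4)) := fun b hb => by
    simp only [P, mem_preimage, domRestrict_apply, mem_ball] at hb ⊢
    linarith [hclose b b.2, dist_triangle (h b) (h₀ b) z]
  have hsol : ∀ b : B, h b = z → b ∈ P := fun b hbz => by
    have hb := hclose b b.2
    rw [hbz] at hb
    simp only [P, mem_preimage, domRestrict_apply, mem_ball']
    linarith
  have hinjP : InjOn (B.domRestrict h) P := injOn_of_isPreconnected_of_isCoveringMapOn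
    (isCoveringMapOn_ball_of_forall_dist_lt hB hloc hint hclose) hP hmaps
  exact congr_arg Subtype.val
    (hinjP (hsol ⟨y, hy⟩ hyz) (hsol ⟨y', hy'⟩ hyz') (hyz.trans hyz'.symm))

end Perturbation

section ImplicitFunction

variable {X E F : Type*} [TopologicalSpace X] [TopologicalSpace E]

lemma continuous_of_forall_eq_iff [CompactSpace E] [TopologicalSpace F] [T1Space F]
    {f : X × E → F} {z : F} {g : X → E} (hf : Continuous f)
    (hg : ∀ x y, f (x, y) = z ↔ y = g x) : Continuous g := by
  refine continuous_iff_isClosed.2 fun C hC => ?_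
  have hpre : g ⁻¹' C = Prod.fst '' (f ⁻¹' {z} ∩ Prod.snd ⁻¹' C) := by
    ext x
    simp [hg]
  rw [hpre]
  exact isClosedMap_fst_of_compactSpace _
    ((isClosed_singleton.preimage hf).inter (hC.preimage continuous_snd))

lemma continuousOn_of_forall_eq_iff [TopologicalSpace F] [T1Space F] {f : X × E → F} {z : F}
    {g : X → E} {V : Set X} {B : Set E} (hB : IsCompact B) (hf : ContinuousOn f (V ×ˢ B))
    (hgB : MapsTo g V B) (hg : ∀ x ∈ V, ∀ y ∈ B, f (x, y) = z ↔ y = g x) :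
    ContinuousOn g V := by
  have : CompactSpace B := isCompact_iff_compactSpace.1 hB
  have hf' : Continuous fun q : V × B => f (q.1, q.2) :=
    hf.comp_continuous (by fun_prop) fun q => ⟨q.1.2, q.2.2⟩
  have hg' : Continuous (hgB.restrict g V B) :=
    continuous_of_forall_eq_iff (z := z) hf' fun x y =>
      (hg x x.2 y y.2).trans (Subtype.val_inj (b := hgB.restrict g V B x))
  exact continuousOn_iff_continuous_domRestrict.2 (continuous_subtype_val.comp hg')

variable [T2Space E] [LocallyCompactSpace E] [NormedAddCommGroup F] [NormedSpace ℝ F]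

theorem exists_continuousOn_eq_of_isLocalHomeomorphOn {f : X × E → F} {U : Set E} (hU : IsOpen U)
    (hf : ContinuousOn f (univ ×ˢ U))
    (hloc : ∀ x, IsLocalHomeomorphOn (fun y => f (x, y)) U) (x₀ : X) {y₀ : E} (hy₀ : y₀ ∈ U) :
    ∃ V ∈ 𝓝 x₀, ∃ g : X → E, ContinuousOn g V ∧ g x₀ = y₀ ∧
      ∀ x ∈ V, g x ∈ U ∧ f (x, g x) = f (x₀, y₀) := by
  obtain ⟨e, hy₀e, he⟩ := hloc x₀ y₀ hy₀
  obtain ⟨B, hBy₀, hBsub, hB⟩ :=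
    local_compact_nhds (inter_mem (e.open_source.mem_nhds hy₀e) (hU.mem_nhds hy₀))
  have hBU : B ⊆ U := fun y hy => (hBsub hy).2
  have hinj : InjOn (fun y => f (x₀, y)) B := he ▸ e.injOn.mono fun y hy => (hBsub hy).1
  have hy₀B : y₀ ∈ B := mem_of_mem_nhds hBy₀
  have hlocB : ∀ x, IsLocalHomeomorphOn (fun y => f (x, y)) B := fun x => (hloc x).mono hBU
  obtain ⟨ρ, hρ, hint⟩ := exists_forall_mem_ball_imp_mem_nhds hB (hlocB x₀).continuousOn
    (fun y hy heq => hinj hy hy₀B heq) hBy₀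
  obtain ⟨V, hV, hclose⟩ := hB.mem_uniformity_of_prod (f := fun x y => f (x, y))
    (hf.mono (prod_mono_right hBU)) (mem_univ x₀) (dist_mem_uniformity (show 0 < ρ / 4 by linarith))
  rw [nhdsWithin_univ] at hV
  have huniq : ∀ x ∈ V, ∀ y ∈ B, ∀ y' ∈ B, f (x, y) = f (x₀, y₀) → f (x, y') = f (x₀, y₀) →
      y = y' := fun x hx y hy y' hy' =>
    eq_of_forall_dist_lt hB (hlocB x₀) hinj (hlocB x) hint (hclose x hx) hy hy'
  have : Nonempty E := ⟨y₀⟩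
  choose! g hgB hg using fun x hx =>
    exists_eq_of_forall_dist_lt hB (hlocB x) hy₀B hint (hclose x hx)
  have hx₀ : x₀ ∈ V := mem_of_mem_nhds hV
  refine ⟨V, hV, g, ?_, huniq x₀ hx₀ _ (hgB x₀ hx₀) _ hy₀B (hg x₀ hx₀) rfl,
    fun x hx => ⟨hBU (hgB x hx), hg x hx⟩⟩
  refine continuousOn_of_forall_eq_iff hB (hf.mono (prod_mono (subset_univ V) hBU)) hgB
    fun x hx y hy => ⟨fun hxy => huniq x hx y hy _ (hgB x hx) hxy (hg x hx), ?_⟩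
  rintro rfl
  exact hg x hx

end ImplicitFunction

theorem implicit_function_theorem_general {X E F : Type*} [TopologicalSpace X]
    [NormedAddCommGroup E] [NormedSpace ℝ E] [FiniteDimensional ℝ E] [NormedAddCommGroup F]
    [NormedSpace ℝ F] {U : Set E} (hU : IsOpen U) (f : X × E → F)
    (hf : ContinuousOn f (univ ×ˢ U))
    (hdiff : ∀ x, HasBijectiveFDerivOn (fun y => f (x, y)) U) (x₀ : X) (y₀ : E) (hy₀ : y₀ ∈ U) :
    ∃ V ∈ 𝓝 x₀, ∃ g : X → E, ContinuousOn g V ∧ g x₀ = y₀ ∧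
      ∀ x ∈ V, g x ∈ U ∧ f (x, g x) = f (x₀, y₀) :=
  exists_continuousOn_eq_of_isLocalHomeomorphOn hU hf
    (fun x => (hdiff x).isLocalHomeomorphOn hU) x₀ hy₀

/-- Implicit function theorem for continuous maps: if `f : X × U → ℝⁿ` is continuous,
`X` locally path-connected Hausdorff, `U ⊆ ℝⁿ` open, and each `f_x` is differentiable
without critical points, then near any `(x₀, y₀)` there is a continuous implicit
function `g` with `f (x, g x) = f (x₀, y₀)`. -/
theorem implicit_function_theorem
    {n : ℕ} {X : Type*} [TopologicalSpace X] [LocallyPathConnectedSpace X] [T2Space X]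
    {U : Set (EuclideanSpace ℝ (Fin n))} (hU : IsOpen U)
    (f : X × EuclideanSpace ℝ (Fin n) → EuclideanSpace ℝ (Fin n))
    (hf : ContinuousOn f ((Set.univ : Set X) ×ˢ U))
    (hdiff : ∀ x : X, ∀ y ∈ U,
      ∃ D : EuclideanSpace ℝ (Fin n) →L[ℝ] EuclideanSpace ℝ (Fin n),
        HasFDerivAt (fun y' => f (x, y')) D y ∧ Function.Bijective D)
    (x₀ : X) (y₀ : EuclideanSpace ℝ (Fin n)) (hy₀ : y₀ ∈ U) :
    ∃ V ∈ nhds x₀, ∃ g : X → EuclideanSpace ℝ (Fin n),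
      ContinuousOn g V ∧ g x₀ = y₀ ∧
      ∀ x ∈ V, g x ∈ U ∧ f (x, g x) = f (x₀, y₀) := by
  exact implicit_function_theorem_general hU f hf hdiff x₀ y₀ hy₀
end

section
/- Let I × V × W be an open neighborhood of (t₀, x₀, y₀) in ℝ × ℝⁿ × ℝⁿ and let F : I × V × W → ℝⁿ be a continuous map with F(t₀, x₀, y₀) = 0. Suppose that for every (t, x) ∈ I × V the map y ↦ F(t, x, y) from W to ℝⁿ is differentiable (not necessarily C¹) and without critical points, i.e. at every y ∈ W it has a Fréchet derivative that is a bijective linear map ℝⁿ → ℝⁿ. Then there exist ε > 0 and a differentiable function φ : (t₀ − ε, t₀ + ε) → ℝⁿ such that φ(t₀) = x₀, φ′(t₀) = y₀, and for all t ∈ (t₀ − ε, t₀ + ε): φ(t) ∈ V, φ′(t) ∈ W, and F(t, φ(t), φ′(t)) = 0. -/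
/-!
Call a point regular for a map `f` if `f` has a bijective derivative there. Near a regular point `x`
the quotient `‖f x' - f x‖ / ‖x' - x‖` is bounded below, and a local minimum of `‖f‖` at a regular
point is a zero. Minimising `‖F (s, ·)‖` over a small ball therefore shows that a zero `y` of
`F (s, ·)` persists under small changes of `s`; in particular, maps with only regular points are
open.

Such maps are also locally injective. By Baire's theorem, if local injectivity fails somewhere, then
it fails at a point near which the lower bound above is uniform over all the bad points `e`. Suppose
`f a = f b` nearby, and choose `e` with `f e` closest to `f a`. Over the ball around `f a` of radius
`‖f a - f e‖` the map `f` is a covering, hence injective on each component, and if `a ≠ b`, then each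
point of the ball has at least two preimages. Over a point of the radius close to `f e`, these
preimages are close to `e`, so by differentiability at `e` the segment joining them still lies over
the ball, which contradicts injectivity on components.

The same covering argument makes the zero `y` of `F (t, x, ·)` near `y₀` unique, so that it is a
continuous function `g (t, x)`, and Peano's theorem solves `x' = g (t, x)`.
-/

open Set Filter Topology Metric

section Covering

variable {A B : Type*} [TopologicalSpace A] [TopologicalSpace B] {p : A → B}

theorem exists_section_of_isCoveringMap [SimplyConnectedSpace B] [LocallyPathConnectedSpace B]
    (hp : IsCoveringMap p) (a : A) : ∃ σ : C(B, A), σ (p a) = a ∧ Function.RightInverse σ p :=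
  let ⟨σ, ⟨hσa, hσ⟩, _⟩ := hp.existsUnique_continuousMap_lifts (ContinuousMap.id B) (p a) a rfl
  ⟨σ, hσa, congrFun hσ⟩

theorem injOn_of_isCoveringMap_of_isPreconnected [SimplyConnectedSpace B]
    [LocallyPathConnectedSpace B] (hp : IsCoveringMap p) {S : Set A} (hS : IsPreconnected S) :
    InjOn p S := by
  intro a ha b hb hab
  obtain ⟨σ, hσa, hσ⟩ := exists_section_of_isCoveringMap hp a
  have hσp : EqOn (σ ∘ p) id S :=
    hp.eqOn_of_comp_eqOn hS (σ.continuous.comp hp.continuous).continuousOn continuousOn_id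
      (fun x _ => hσ (p x)) ha hσa
  calc a = σ (p b) := by rw [← hab, hσa]
    _ = b := hσp hb

theorem nontrivial_fiber_of_isCoveringMap [SimplyConnectedSpace B] [LocallyPathConnectedSpace B]
    (hp : IsCoveringMap p) {b : B} (hb : (p ⁻¹' {b}).Nontrivial) (b' : B) :
    (p ⁻¹' {b'}).Nontrivial := by
  obtain ⟨x, rfl, y, hy, hxy⟩ := hb
  obtain ⟨σ, hσx, hσ⟩ := exists_section_of_isCoveringMap hp x
  obtain ⟨τ, hτy, hτ⟩ := exists_section_of_isCoveringMap hp y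
  refine ⟨σ b', hσ b', τ b', hτ b', fun hστ => hxy ?_⟩
  have hστ' : (σ : B → A) = τ := hp.eq_of_comp_eq σ.continuous τ.continuous
    (funext fun z => (hσ z).trans (hτ z).symm) b' hστ
  rw [← hσx, ← hτy, hστ', mem_preimage.1 hy]

theorem isCoveringMapOn_restrict_of_isCompact [T2Space A] [T2Space B] {f : A → B} {K : Set A}
    {U : Set B} (hK : IsCompact K) (hf : ContinuousOn f K)
    (hint : K ∩ f ⁻¹' U ⊆ interior K) (hloc : IsLocalHomeomorphOn f (K ∩ f ⁻¹' U)) :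
    IsCoveringMapOn (K.domRestrict f) U := by
  have := isCompact_iff_compactSpace.mp hK
  have hval : IsLocalHomeomorphOn (Subtype.val : K → A) (Subtype.val ⁻¹' interior K) := by
    refine (isLocalHomeomorphOn_iff_isOpenEmbedding_restrict _).2 fun x hx =>
      ⟨_, (isOpen_interior.preimage continuous_subtype_val).mem_nhds hx, ?_⟩
    have hemb : IsEmbedding ((Subtype.val ⁻¹' interior K).domRestrict (Subtype.val : K → A)) :=
      IsEmbedding.subtypeVal.comp IsEmbedding.subtypeVal
    refine ⟨hemb, ?_⟩
    rw [range_domRestrict, Subtype.image_preimage_coe, inter_eq_right.2 interior_subset]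
    exact isOpen_interior
  refine .of_isLocalHomeomorphOn (continuousOn_iff_continuous_domRestrict.mp hf) ?_
  exact hloc.comp (hval.mono fun x hx => hint ⟨x.2, hx⟩) fun x hx => ⟨x.2, hx⟩

variable {f : A → B} {K : Set A} {U : Set B} [SimplyConnectedSpace U] [LocallyPathConnectedSpace U]

theorem injOn_of_isCoveringMapOn_restrict (hf : IsCoveringMapOn (K.domRestrict f) U) {S : Set A}
    (hS : IsPreconnected S) (hSK : S ⊆ K) (hSU : MapsTo f S U) : InjOn f S := by
  let lift : S → K.domRestrict f ⁻¹' U := fun x => ⟨⟨x, hSK x.2⟩, hSU x.2⟩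
  have hlift : Continuous lift := by fun_prop
  have := isPreconnected_iff_preconnectedSpace.mp hS
  have hinj := injOn_of_isCoveringMap_of_isPreconnected hf.isCoveringMap_restrictPreimage
    (isPreconnected_range hlift)
  intro a ha b hb hab
  have hlift_eq : lift ⟨a, ha⟩ = lift ⟨b, hb⟩ :=
    hinj (mem_range_self _) (mem_range_self _) (Subtype.ext hab)
  exact congrArg (fun x => x.1.1) hlift_eq

theorem nontrivial_fiber_of_isCoveringMapOn_restrict (hf : IsCoveringMapOn (K.domRestrict f) U)
    {u w : B} (hu : u ∈ U) (hw : w ∈ U) (hfib : (K ∩ f ⁻¹' {u}).Nontrivial) :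
    (K ∩ f ⁻¹' {w}).Nontrivial := by
  obtain ⟨a, ⟨haK, rfl⟩, b, ⟨hbK, hba⟩, hab⟩ := hfib
  have hbU : f b ∈ U := mem_singleton_iff.1 hba ▸ hu
  obtain ⟨x, hx, y, hy, hxy⟩ := nontrivial_fiber_of_isCoveringMap
    hf.isCoveringMap_restrictPreimage (b := ⟨f a, hu⟩)
    ⟨⟨⟨a, haK⟩, hu⟩, rfl, ⟨⟨b, hbK⟩, hbU⟩, Subtype.ext hba,
      fun h => hab (congrArg (fun x => x.1.1) h)⟩ ⟨w, hw⟩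
  exact ⟨x, ⟨x.1.2, congrArg Subtype.val hx⟩, y, ⟨y.1.2, congrArg Subtype.val hy⟩,
    fun h => hxy (Subtype.ext (Subtype.ext h))⟩

end Covering

section CoveringBall

variable {X Y : Type*} [NormedAddCommGroup X] [NormedSpace ℝ X] [NormedAddCommGroup Y]
  [NormedSpace ℝ Y] {f : X → Y} {e : X}

theorem simplyConnectedSpace_ball (z : Y) {r : ℝ} (hr : 0 < r) : SimplyConnectedSpace (ball z r) :=
  have := (convex_ball z r).contractibleSpace (nonempty_ball.mpr hr)
  inferInstance

theorem locallyPathConnectedSpace_ball (z : Y) (r : ℝ) : LocallyPathConnectedSpace (ball z r) :=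
  isOpen_ball.locallyPathConnectedSpace

theorem eventually_forall_closedBall_norm_sub_sub_le {D : X →L[ℝ] Y} {L κ : ℝ}
    (hD : HasFDerivAt f D e) (hL : 0 < L) (hκ : 0 < κ) :
    ∀ᶠ t : ℝ in 𝓝[>] 0, ∀ y ∈ closedBall e (t * L), ‖f y - f e - D (y - e)‖ ≤ t * κ := by
  obtain ⟨δ, hδ, herror⟩ :=
    Metric.eventually_nhds_iff.1 (hD.isLittleO.def (c := κ / L) (by positivity))
  have hlim : Tendsto (fun t : ℝ => t * L) (𝓝[>] 0) (𝓝 0) :=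
    (Continuous.tendsto' (by fun_prop) _ _ (by simp)).mono_left nhdsWithin_le_nhds
  filter_upwards [hlim.eventually (gt_mem_nhds hδ)] with t ht y hy
  calc ‖f y - f e - D (y - e)‖ ≤ κ / L * ‖y - e‖ := herror ((mem_closedBall.1 hy).trans_lt ht)
    _ ≤ κ / L * (t * L) := by gcongr; exact mem_closedBall_iff_norm.1 hy
    _ = t * κ := by field_simp

theorem eventually_mapsTo_segment_ball {D : X →L[ℝ] Y} {η : Y} {K : Set X} {c : ℝ}
    (hD : HasFDerivAt f D e) (hη : η ≠ 0) (hc : 0 < c)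
    (hlower : ∀ y ∈ K, c * ‖y - e‖ ≤ ‖f y - f e‖) :
    ∀ᶠ t : ℝ in 𝓝[>] 0, ∀ a ∈ K ∩ f ⁻¹' {f e + t • η}, ∀ b ∈ K ∩ f ⁻¹' {f e + t • η},
      MapsTo f (segment ℝ a b) (ball (f e + η) ‖η‖) := by
  -- Both endpoints are within `t * (‖η‖ / c)` of `e`, where `f` differs from its affine
  -- approximation by at most `t * (‖η‖ / 4)`.
  have hη_pos : 0 < ‖η‖ := norm_pos_iff.2 hη
  filter_upwards [eventually_forall_closedBall_norm_sub_sub_le hD (div_pos hη_pos hc)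
    (div_pos hη_pos four_pos), Ioo_mem_nhdsGT (zero_lt_one' ℝ)] with t herror ⟨ht0, ht1⟩
  let S : Set X := closedBall e (t * (‖η‖ / c)) ∩ D ⁻¹' closedBall (D e + t • η) (t * (‖η‖ / 4))
  have hS : Convex ℝ S := (convex_closedBall _ _).inter ((convex_closedBall _ _).linear_preimage _)
  have hfiber : K ∩ f ⁻¹' {f e + t • η} ⊆ S := by
    rintro y ⟨hyK, hfy⟩
    have hdiff : f y - f e = t • η := sub_eq_of_eq_add' hfy
    have hy : y ∈ closedBall e (t * (‖η‖ / c)) := by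
      have hle := hlower y hyK
      rw [hdiff, norm_smul, Real.norm_of_nonneg ht0.le] at hle
      rwa [mem_closedBall_iff_norm, ← mul_div_assoc, le_div_iff₀' hc]
    have hyD := herror y hy
    rw [hdiff, norm_sub_rev, map_sub, sub_sub, ← mem_closedBall_iff_norm] at hyD
    exact ⟨hy, hyD⟩
  rintro a ha b hb y hy
  obtain ⟨hye, hyD⟩ := hS.segment_subset (hfiber ha) (hfiber hb) hy
  rw [mem_ball_iff_norm]
  calc ‖f y - (f e + η)‖
      = ‖(f y - f e - D (y - e)) + (D y - (D e + t • η)) + (t - 1) • η‖ := by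
        rw [map_sub]; congr 1; module
    _ ≤ ‖f y - f e - D (y - e)‖ + ‖D y - (D e + t • η)‖ + ‖(t - 1) • η‖ := norm_add₃_le
    _ ≤ t * (‖η‖ / 4) + t * (‖η‖ / 4) + (1 - t) * ‖η‖ := by
        rw [norm_smul, norm_sub_rev t 1, Real.norm_of_nonneg (sub_nonneg.2 ht1.le)]
        gcongr
        exacts [herror y hye, mem_closedBall_iff_norm.1 hyD]
    _ < ‖η‖ := by linarith [mul_pos ht0 hη_pos]

theorem subsingleton_fiber_of_isCoveringMapOn_restrict_ball {z : Y} {K : Set X} {c : ℝ}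
    (hK : Convex ℝ K) (hcov : IsCoveringMapOn (K.domRestrict f) (ball z ‖z - f e‖))
    (hf : DifferentiableAt ℝ f e) (hc : 0 < c)
    (hlower : ∀ y ∈ K, c * ‖y - e‖ ≤ ‖f y - f e‖) : (K ∩ f ⁻¹' {z}).Subsingleton := by
  -- Two points over `z` would give two points over `f e + t • η` for every small `t`, where
  -- `η = z - f e`; the segment between these stays over the ball, so `f` is injective on it.
  rcases eq_or_ne z (f e) with rfl | hz
  · refine subsingleton_of_forall_eq e fun y ⟨hyK, hye⟩ => ?_
    have hle := hlower y hyK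
    rw [mem_preimage.1 hye, sub_self, norm_zero] at hle
    exact sub_eq_zero.1 (norm_le_zero_iff.1 (nonpos_of_mul_nonpos_right hle hc))
  rw [← not_nontrivial_iff]
  intro hfiber
  have hη : 0 < ‖z - f e‖ := norm_pos_iff.2 (sub_ne_zero.2 hz)
  have := simplyConnectedSpace_ball z hη
  have := locallyPathConnectedSpace_ball z ‖z - f e‖
  obtain ⟨t, hsegment, ht0, ht1⟩ := ((eventually_mapsTo_segment_ball hf.hasFDerivAt
    (sub_ne_zero.2 hz) hc hlower).and (Ioo_mem_nhdsGT (zero_lt_one' ℝ))).exists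
  rw [add_sub_cancel] at hsegment
  have ht : f e + t • (z - f e) ∈ ball z ‖z - f e‖ := by
    rw [mem_ball_iff_norm, show f e + t • (z - f e) - z = -((1 - t) • (z - f e)) by module,
      norm_neg, norm_smul, Real.norm_of_nonneg (sub_nonneg.2 ht1.le)]
    linarith [mul_pos ht0 hη]
  obtain ⟨a, ha, b, hb, hne⟩ :=
    nontrivial_fiber_of_isCoveringMapOn_restrict hcov (mem_ball_self hη) ht hfiber
  exact hne (injOn_of_isCoveringMapOn_restrict hcov (convex_segment a b).isPreconnected
    (hK.segment_subset ha.1 hb.1) (hsegment a ha b hb) (left_mem_segment ℝ a b)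
    (right_mem_segment ℝ a b) (ha.2.trans hb.2.symm))

end CoveringBall

section Regular

variable {X Y : Type*} [NormedAddCommGroup X] [NormedSpace ℝ X] [NormedAddCommGroup Y]
  [NormedSpace ℝ Y] {f : X → Y} {x : X}

/-- `x` is a regular (noncritical) point of `f`: the Fréchet derivative of `f` at `x` exists and is
bijective. No regularity of `f` away from `x` is implied. -/
def IsRegularAt (f : X → Y) (x : X) : Prop :=
  ∃ D : X →L[ℝ] Y, HasFDerivAt f D x ∧ Function.Bijective D

theorem IsRegularAt.continuousAt (hf : IsRegularAt f x) : ContinuousAt f x :=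
  let ⟨_, hD, _⟩ := hf
  hD.continuousAt

theorem IsRegularAt.sub_const (hf : IsRegularAt f x) (z : Y) :
    IsRegularAt (fun x' => f x' - z) x :=
  let ⟨D, hD, hDbij⟩ := hf
  ⟨D, hD.sub_const z, hDbij⟩

theorem IsRegularAt.exists_pos_eventually_mul_norm_sub_le [FiniteDimensional ℝ X]
    (hf : IsRegularAt f x) : ∃ c > 0, ∀ᶠ x' in 𝓝 x, c * ‖x' - x‖ ≤ ‖f x' - f x‖ := by
  obtain ⟨D, hD, hDbij⟩ := hf
  obtain ⟨C, hC, hDanti⟩ := LinearMap.exists_antilipschitzWith (D : X →ₗ[ℝ] Y)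
    (LinearMap.ker_eq_bot.mpr hDbij.1)
  have hC' : (0 : ℝ) < C := hC
  refine ⟨(2 * C : ℝ)⁻¹, by positivity, ?_⟩
  filter_upwards [hD.isLittleO.def (c := (2 * C : ℝ)⁻¹) (by positivity)] with x' hx'
  have hlower : (C : ℝ)⁻¹ * ‖x' - x‖ ≤ ‖D (x' - x)‖ := by
    rw [inv_mul_le_iff₀ hC']
    simpa using hDanti.le_mul_dist (x' - x) 0
  have htriangle : ‖D (x' - x)‖ ≤ ‖f x' - f x‖ + ‖f x' - f x - D (x' - x)‖ := by
    simpa using norm_sub_le (f x' - f x) (f x' - f x - D (x' - x))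
  have hhalves : (C : ℝ)⁻¹ * ‖x' - x‖ = 2 * ((2 * C : ℝ)⁻¹ * ‖x' - x‖) := by field_simp
  linarith

theorem IsRegularAt.exists_nat_forall_mul_norm_sub_le [FiniteDimensional ℝ X]
    (hf : IsRegularAt f x) : ∃ n : ℕ, ∀ x', dist x' x < 1 / ((n : ℝ) + 1) →
      1 / ((n : ℝ) + 1) * ‖x' - x‖ ≤ ‖f x' - f x‖ := by
  obtain ⟨c, hc, hlower⟩ := hf.exists_pos_eventually_mul_norm_sub_le
  obtain ⟨r, hr, hball⟩ := Metric.eventually_nhds_iff.1 hlower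
  obtain ⟨n, hn⟩ := exists_nat_one_div_lt (lt_min hc hr)
  refine ⟨n, fun x' hx' => le_trans ?_ (hball (hx'.trans (hn.trans_le (min_le_right _ _))))⟩
  gcongr
  exact hn.le.trans (min_le_left _ _)

theorem IsRegularAt.eq_zero_of_isLocalMin_norm (hf : IsRegularAt f x)
    (hmin : IsLocalMin (fun x' => ‖f x'‖) x) : f x = 0 := by
  -- Moving in a direction `v` with `D v = -f x` shrinks `f x` by the factor `1 - t` up to `o(t)`.
  obtain ⟨D, hD, -, hDsurj⟩ := hf
  obtain ⟨v, hv⟩ := hDsurj (-f x)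
  have hline : HasDerivAt (fun t : ℝ => f (x + t • v)) (-f x) 0 := hv ▸ hD.hasLineDerivAt v
  have hmin_line : ∀ᶠ t : ℝ in 𝓝 0, ‖f x‖ ≤ ‖f (x + t • v)‖ := by
    have hcont : Tendsto (fun t : ℝ => x + t • v) (𝓝 0) (𝓝 x) :=
      Continuous.tendsto' (by fun_prop) _ _ (by simp)
    exact hcont.eventually hmin
  by_contra hfx
  have hpos : 0 < ‖f x‖ := norm_pos_iff.2 hfx
  have herror := hline.isLittleO.def (c := ‖f x‖ / 2) (by positivity)
  obtain ⟨t, ⟨hle, herr⟩, ht0, ht1⟩ :=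
    (((hmin_line.and herror).filter_mono nhdsWithin_le_nhds).and
      (Ioo_mem_nhdsGT (zero_lt_one' ℝ))).exists
  rw [zero_smul, add_zero, sub_zero, Real.norm_of_nonneg ht0.le] at herr
  have hdecrease : ‖f (x + t • v)‖ ≤ (1 - t) * ‖f x‖ + ‖f x‖ / 2 * t := by
    calc ‖f (x + t • v)‖ = ‖(1 - t) • f x + (f (x + t • v) - f x - t • -f x)‖ := by
          congr 1; module
      _ ≤ ‖(1 - t) • f x‖ + ‖f (x + t • v) - f x - t • -f x‖ := norm_add_le _ _
      _ ≤ _ := by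
          rw [norm_smul, Real.norm_of_nonneg (by linarith)]
          gcongr
  nlinarith [mul_pos ht0 hpos]

theorem exists_mem_ball_eq_zero_of_norm_lt_on_sphere [ProperSpace X] {r : ℝ} (hr : 0 < r)
    (hcont : ContinuousOn f (closedBall x r)) (hreg : ∀ y ∈ ball x r, IsRegularAt f y)
    (hlt : ∀ y ∈ sphere x r, ‖f x‖ < ‖f y‖) : ∃ y ∈ ball x r, f y = 0 := by
  obtain ⟨y, hy, hmin⟩ :=
    exists_isLocalMin_mem_ball hcont.norm (mem_closedBall_self hr.le) hlt
  exact ⟨y, hy, (hreg y hy).eq_zero_of_isLocalMin_norm hmin⟩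

end Regular

section ImplicitExistence

variable {P X Y : Type*} [TopologicalSpace P] [NormedAddCommGroup X] [NormedSpace ℝ X]
  [FiniteDimensional ℝ X] [NormedAddCommGroup Y] [NormedSpace ℝ Y] {F : P × X → Y} {W : Set X}
  {s₁ : P} {y₁ : X}

theorem exists_closedBall_subset_eventually_lt_norm_on_sphere (hW : W ∈ 𝓝 y₁)
    (hcont : ∀ y ∈ W, ContinuousAt F (s₁, y)) (hreg : IsRegularAt (fun y => F (s₁, y)) y₁)
    (h0 : F (s₁, y₁) = 0) :
    ∃ R > 0, closedBall y₁ R ⊆ W ∧ ∃ m > 0, ∀ᶠ s in 𝓝 s₁, ∀ y ∈ sphere y₁ R, m < ‖F (s, y)‖ := by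
  obtain ⟨c, hc, hlower⟩ := hreg.exists_pos_eventually_mul_norm_sub_le
  obtain ⟨R, hR, hball⟩ := nhds_basis_closedBall.mem_iff.1 (inter_mem hW hlower)
  refine ⟨R, hR, fun y hy => (hball hy).1, c * R / 2, by positivity, ?_⟩
  refine (isCompact_sphere y₁ R).eventually_forall_of_forall_eventually fun y hy => ?_
  obtain ⟨hyW, hy_lower⟩ := hball (sphere_subset_closedBall hy)
  rw [mem_ofPred_eq, h0, sub_zero, mem_sphere_iff_norm.1 hy] at hy_lower
  exact (hcont y hyW).norm.eventually
    (lt_mem_nhds ((half_lt_self (mul_pos hc hR)).trans_le hy_lower))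

theorem eventually_exists_mem_eq_zero (hW : W ∈ 𝓝 y₁) (hcont : ∀ y ∈ W, ContinuousAt F (s₁, y))
    (hreg : ∀ᶠ s in 𝓝 s₁, ∀ y ∈ W, IsRegularAt (fun y => F (s, y)) y) (h0 : F (s₁, y₁) = 0) :
    ∀ᶠ s in 𝓝 s₁, ∃ y ∈ W, F (s, y) = 0 := by
  have hy₁W : y₁ ∈ W := mem_of_mem_nhds hW
  obtain ⟨R, hR, hRW, m, hm, hsphere⟩ := exists_closedBall_subset_eventually_lt_norm_on_sphere hW
    hcont (hreg.self_of_nhds y₁ hy₁W) h0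
  have hcenter : ∀ᶠ s in 𝓝 s₁, ‖F (s, y₁)‖ < m :=
    (((hcont y₁ hy₁W).comp₂ continuousAt_id continuousAt_const).norm).eventually
      (gt_mem_nhds (by simpa [h0] using hm))
  filter_upwards [hsphere, hcenter, hreg] with s hs_sphere hs_center hs_reg
  obtain ⟨y, hy, hy0⟩ := exists_mem_ball_eq_zero_of_norm_lt_on_sphere (f := fun y => F (s, y)) hR
    (fun y hy => (hs_reg y (hRW hy)).continuousAt.continuousWithinAt)
    (fun y hy => hs_reg y (hRW (ball_subset_closedBall hy)))
    (fun y hy => hs_center.trans (hs_sphere y hy))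
  exact ⟨y, hRW (ball_subset_closedBall hy), hy0⟩

theorem isOpen_image_of_forall_isRegularAt {f : X → Y} {Ω : Set X} (hΩ : IsOpen Ω)
    (hreg : ∀ x ∈ Ω, IsRegularAt f x) : IsOpen (f '' Ω) := by
  rw [isOpen_iff_mem_nhds]
  rintro _ ⟨x, hx, rfl⟩
  filter_upwards [eventually_exists_mem_eq_zero (F := fun p : Y × X => f p.2 - p.1)
    (hΩ.mem_nhds hx) (fun y hy => ((hreg y hy).continuousAt.comp continuousAt_snd).sub
      continuousAt_fst) (.of_forall fun z y hy => (hreg y hy).sub_const z) (sub_self _)]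
    with z ⟨y, hy, hyz⟩
  exact ⟨y, hy, sub_eq_zero.1 hyz⟩

end ImplicitExistence

section LocalInjectivity

variable {X Y : Type*} [NormedAddCommGroup X] [NormedSpace ℝ X] [FiniteDimensional ℝ X]
  [NormedAddCommGroup Y] [NormedSpace ℝ Y] {f : X → Y}

/-- The set of points having a neighbourhood on which `f` is injective; for a map all of whose
points are regular, these turn out to be all points. -/
def locallyInjectiveSet {A B : Type*} [TopologicalSpace A] (f : A → B) : Set A :=
  {x | ∃ U ∈ 𝓝 x, InjOn f U}

theorem isOpen_locallyInjectiveSet {A B : Type*} [TopologicalSpace A] (f : A → B) :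
    IsOpen (locallyInjectiveSet f) := by
  rw [isOpen_iff_mem_nhds]
  rintro x ⟨U, hU, hinj⟩
  filter_upwards [eventually_mem_nhds_iff.mpr hU] with y hy using ⟨U, hy, hinj⟩

theorem isLocalHomeomorphOn_of_forall_isRegularAt {Ω : Set X} (hΩ : IsOpen Ω)
    (hreg : ∀ x ∈ Ω, IsRegularAt f x) : IsLocalHomeomorphOn f (Ω ∩ locallyInjectiveSet f) := by
  refine (isLocalHomeomorphOn_iff_isOpenEmbedding_restrict _).2 ?_
  rintro x ⟨hxΩ, U, hU, hinj⟩
  have hUΩ : U ∩ Ω ∈ 𝓝 x := inter_mem hU (hΩ.mem_nhds hxΩ)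
  refine ⟨interior (U ∩ Ω), interior_mem_nhds.2 hUΩ, ?_⟩
  have hsub : interior (U ∩ Ω) ⊆ U ∩ Ω := interior_subset
  refine .of_continuous_injective_isOpenMap ?_ ?_ ?_
  · exact continuousOn_iff_continuous_domRestrict.1 fun y hy =>
      (hreg y (hsub hy).2).continuousAt.continuousWithinAt
  · exact injOn_iff_injective.1 (hinj.mono fun y hy => (hsub hy).1)
  · intro O hO
    rw [domRestrict_eq, image_comp]
    refine isOpen_image_of_forall_isRegularAt (isOpen_interior.isOpenMap_subtype_val _ hO) ?_
    rintro _ ⟨y, -, rfl⟩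
    exact hreg y (hsub y.2).2

theorem exists_ball_forall_mul_norm_sub_le {T : Set X} (hT : IsLocallyClosed T)
    (hTne : T.Nonempty) (hreg : ∀ x ∈ T, IsRegularAt f x) :
    ∃ x₁ ∈ T, ∃ c > 0, ∃ ρ > 0, ∀ e ∈ T ∩ ball x₁ ρ, ∀ y ∈ ball x₁ ρ,
      c * ‖y - e‖ ≤ ‖f y - f e‖ := by
  have : LocallyCompactSpace T := hT.locallyCompactSpace
  have : Nonempty T := hTne.to_subtype
  let δ : ℕ → ℝ := fun n => 1 / ((n : ℝ) + 1)
  let A : ℕ → Set T := fun n => {e | ∀ y : X, dist y e < δ n → δ n * ‖y - e‖ ≤ ‖f y - f e‖}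
  have hf : Continuous fun e : T => f e := continuous_iff_continuousAt.2 fun e =>
    (hreg e e.2).continuousAt.comp continuous_subtype_val.continuousAt
  have hAclosed (n : ℕ) : IsClosed (A n) := by
    have hA : A n = ⋂ y : X, {e : T | dist y e < δ n}ᶜ ∪ {e | δ n * ‖y - e‖ ≤ ‖f y - f e‖} := by
      ext e
      simp only [A, mem_iInter, mem_union, mem_compl_iff, mem_ofPred_eq, imp_iff_not_or]
    rw [hA]
    exact isClosed_iInter fun y => (isOpen_lt (by fun_prop) continuous_const).isClosed_compl.union
      (isClosed_le (by fun_prop) (continuous_const.sub hf).norm)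
  have hAcover : ⋃ n, A n = univ :=
    eq_univ_of_forall fun e => mem_iUnion.2 (hreg e e.2).exists_nat_forall_mul_norm_sub_le
  obtain ⟨n, x₁, hx₁⟩ := nonempty_interior_of_iUnion_of_closed hAclosed hAcover
  obtain ⟨r, hr, hrA⟩ := Metric.mem_nhds_iff.1 (mem_interior_iff_mem_nhds.1 hx₁)
  have hδ : 0 < δ n := by positivity
  refine ⟨x₁, x₁.2, δ n, hδ, min r (δ n / 2), by positivity, ?_⟩
  rintro e ⟨heT, he⟩ y hy
  refine hrA (a := ⟨e, heT⟩) (ball_subset_ball (min_le_left _ _) he) y ?_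
  have he' := ball_subset_ball (min_le_right _ _) he
  have hy' := ball_subset_ball (min_le_right _ _) hy
  linarith [dist_triangle_right y e x₁, mem_ball.1 he', mem_ball.1 hy']

theorem isCoveringMapOn_restrict_closedBall {x₁ : X} {r : ℝ} {U : Set Y}
    (hreg : ∀ y ∈ closedBall x₁ r, IsRegularAt f y) (hsphere : ∀ y ∈ sphere x₁ r, f y ∉ U)
    (hinj : closedBall x₁ r ∩ f ⁻¹' U ⊆ locallyInjectiveSet f) :
    IsCoveringMapOn ((closedBall x₁ r).domRestrict f) U := by
  have hball : closedBall x₁ r ∩ f ⁻¹' U ⊆ ball x₁ r := fun y ⟨hy, hyU⟩ =>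
    hy.lt_of_ne fun hyr => hsphere y hyr hyU
  refine isCoveringMapOn_restrict_of_isCompact (isCompact_closedBall x₁ r)
    (fun y hy => (hreg y hy).continuousAt.continuousWithinAt)
    (hball.trans ball_subset_interior_closedBall) ?_
  exact (isLocalHomeomorphOn_of_forall_isRegularAt isOpen_ball fun y hy =>
    hreg y (ball_subset_closedBall hy)).mono fun y hy => ⟨hball hy, hinj hy⟩

theorem mem_locallyInjectiveSet_of_forall_mul_norm_sub_le {x₁ : X} {c ρ : ℝ} (hc : 0 < c)
    (hρ : 0 < ρ) (hreg : ∀ y ∈ closedBall x₁ ρ, IsRegularAt f y)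
    (hlower : ∀ e ∈ closedBall x₁ ρ \ locallyInjectiveSet f, ∀ y ∈ closedBall x₁ ρ,
      c * ‖y - e‖ ≤ ‖f y - f e‖) : x₁ ∈ locallyInjectiveSet f := by
  -- Otherwise `f a = f b` for some `a ≠ b` near `x₁`. Among the points `e` near `x₁` at which local
  -- injectivity fails, take one for which `‖f a - f e‖` is minimal: the ball around `f a` with this
  -- radius is then evenly covered, and `f` is differentiable at the point `e` over its boundary.
  by_contra hx₁
  have hx₁K : x₁ ∈ closedBall x₁ ρ := mem_closedBall_self hρ.le
  suffices hinj : InjOn f (closedBall x₁ ρ ∩ f ⁻¹' ball (f x₁) (c * ρ / 2)) from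
    hx₁ ⟨_, inter_mem (closedBall_mem_nhds _ hρ)
      ((hreg x₁ hx₁K).continuousAt (ball_mem_nhds _ (by positivity))), hinj⟩
  rintro a ⟨haK, ha⟩ b ⟨hbK, -⟩ hab
  obtain ⟨e, he, hmin⟩ :=
    ((isCompact_closedBall x₁ ρ).diff (isOpen_locallyInjectiveSet f)).exists_isMinOn
      (f := fun e => ‖f a - f e‖) ⟨x₁, hx₁K, hx₁⟩
      fun y hy => ((hreg y hy.1).continuousAt.continuousWithinAt.const_sub (f a)).norm
  have hradius : ‖f a - f e‖ ≤ ‖f a - f x₁‖ := hmin ⟨hx₁K, hx₁⟩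
  have hcov : IsCoveringMapOn ((closedBall x₁ ρ).domRestrict f) (ball (f a) ‖f a - f e‖) := by
    refine isCoveringMapOn_restrict_closedBall hreg (fun y hy hyU => ?_) fun y ⟨hyK, hyU⟩ => ?_
    · have hy_lower := hlower x₁ ⟨hx₁K, hx₁⟩ y (sphere_subset_closedBall hy)
      rw [mem_sphere_iff_norm.1 hy] at hy_lower
      linarith [mem_ball_iff_norm.1 hyU, mem_ball_iff_norm.1 ha,
        norm_sub_le_norm_sub_add_norm_sub (f y) (f a) (f x₁)]
    · by_contra hy
      exact ((mem_ball_iff_norm'.1 hyU).trans_le (hmin ⟨hyK, hy⟩)).false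
  obtain ⟨D, hD, -⟩ := hreg e he.1
  exact subsingleton_fiber_of_isCoveringMapOn_restrict_ball (convex_closedBall x₁ ρ) hcov
    hD.differentiableAt hc (hlower e he) ⟨haK, rfl⟩ ⟨hbK, hab.symm⟩

theorem subset_locallyInjectiveSet_of_forall_isRegularAt {Ω : Set X} (hΩ : IsOpen Ω)
    (hreg : ∀ x ∈ Ω, IsRegularAt f x) : Ω ⊆ locallyInjectiveSet f := by
  by_contra hsub
  obtain ⟨x₁, ⟨hx₁Ω, hx₁⟩, c, hc, ρ, hρ, hlower⟩ := exists_ball_forall_mul_norm_sub_le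
    (hΩ.isLocallyClosed.inter (isOpen_locallyInjectiveSet f).isClosed_compl.isLocallyClosed)
    (not_subset.1 hsub) fun x hx => hreg x hx.1
  obtain ⟨r, hr, hball⟩ :=
    nhds_basis_closedBall.mem_iff.1 (inter_mem (hΩ.mem_nhds hx₁Ω) (ball_mem_nhds x₁ hρ))
  exact hx₁ <| mem_locallyInjectiveSet_of_forall_mul_norm_sub_le hc hr
    (fun y hy => hreg y (hball hy).1) fun e he y hy =>
      hlower e ⟨⟨(hball he.1).1, he.2⟩, (hball he.1).2⟩ y (hball hy).2

end LocalInjectivity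

section Peano

variable {E : Type*} [NormedAddCommGroup E] [NormedSpace ℝ E]

theorem hasDerivAt_of_tendsto_approx_solutions {ι : Type*} {l : Filter ι} [NeBot l]
    {u u' : ι → ℝ → E} {φ : ℝ → E} {f : ℝ × E → E} {J : Set ℝ} {M t : ℝ}
    (hJ : IsOpen J) (hJconv : Convex ℝ J) (ht : t ∈ J)
    (hu : ∀ i, ∀ s ∈ J, HasDerivAt (u i) (u' i s) s) (hM : ∀ i, ∀ s ∈ J, ‖u' i s‖ ≤ M)
    (hdefect : Tendsto (fun p : ι × ℝ => u' p.1 p.2 - f (p.2, u p.1 p.2)) (l ×ˢ 𝓝 t) (𝓝 0))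
    (hlim : ∀ s ∈ J, Tendsto (u · s) l (𝓝 (φ s))) (hf : ContinuousAt f (t, φ t)) :
    HasDerivAt φ (f (t, φ t)) t := by
  have hsnd : Tendsto (fun p : ι × ℝ => p.2) (l ×ˢ 𝓝 t) (𝓝 t) := tendsto_snd
  have htJ : ∀ᶠ p : ι × ℝ in l ×ˢ 𝓝 t, p.2 ∈ J := hsnd.eventually (hJ.mem_nhds ht)
  have hincrement : Tendsto (fun p : ι × ℝ => u p.1 p.2 - u p.1 t) (l ×ˢ 𝓝 t) (𝓝 0) := by
    refine squeeze_zero_norm' (a := fun p => M * ‖p.2 - t‖) ?_ ?_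
    · filter_upwards [htJ] with p hp
      exact hJconv.norm_image_sub_le_of_norm_hasDerivWithin_le
        (fun s hs => (hu p.1 s hs).hasDerivWithinAt) (hM p.1) ht hp
    · simpa using (hsnd.sub_const t).norm.const_mul M
  have hut : Tendsto (fun p : ι × ℝ => u p.1 p.2) (l ×ˢ 𝓝 t) (𝓝 (φ t)) := by
    simpa using hincrement.add ((hlim t ht).comp tendsto_fst)
  have hu' : Tendsto (fun p : ι × ℝ => u' p.1 p.2) (l ×ˢ 𝓝 t) (𝓝 (f (t, φ t))) := by
    simpa using hdefect.add (hf.tendsto.comp (hsnd.prodMk_nhds hut))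
  exact hasDerivAt_of_tendstoUniformlyOnFilter (g' := fun _ => f (t, φ t))
    (tendsto_prod_filter_iff.1 hu') (htJ.mono fun p hp => hu p.1 p.2 hp)
    (mem_of_superset (hJ.mem_nhds ht) hlim)

variable [FiniteDimensional ℝ E]

theorem exists_approx_solution {f : ℝ × E → E} {M T ε : ℝ} (hf : Continuous f)
    (hM : ∀ p, ‖f p‖ ≤ M) (hT : 0 ≤ T) (hε : 0 < ε) (t₀ : ℝ) (x₀ : E) :
    ∃ u u' : ℝ → E, u t₀ = x₀ ∧ ∀ t ∈ Ioo (t₀ - T) (t₀ + T),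
      HasDerivAt u (u' t) t ∧ ‖u' t - f (t, u t)‖ < ε := by
  obtain ⟨g, hg, hgf, -⟩ := hf.exists_contDiff_approx 1 (continuous_const (y := ε)) fun _ => hε
  simp only [dist_eq_norm] at hgf
  have hgM (p : ℝ × E) : ‖g p‖ ≤ M + ε := by
    have h := norm_le_norm_add_norm_sub' (g p) (f p)
    linarith [hM p, hgf p]
  have hM0 : 0 ≤ M := (norm_nonneg _).trans (hM (t₀, x₀))
  lift T to NNReal using hT
  lift M + ε to NNReal using by positivity with L
  obtain ⟨K, hK⟩ : ∃ K, LipschitzOnWith K g (closedBall t₀ T ×ˢ closedBall x₀ (L * T)) :=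
    LocallyLipschitzOn.exists_lipschitzOnWith_of_compact
      ((isCompact_closedBall _ _).prod (isCompact_closedBall _ _))
      hg.locallyLipschitz.locallyLipschitzOn
  have hPL : IsPicardLindelof (fun t x => g (t, x)) (tmin := t₀ - T) (tmax := t₀ + T)
      ⟨t₀, by simp⟩ x₀ (L * T) 0 L K :=
    { lipschitzOnWith := fun t ht => by
        simpa [Function.comp_def] using hK.comp (LipschitzWith.prodMk_left t).lipschitzOnWith
          fun x hx => ⟨by rwa [Real.closedBall_eq_Icc], hx⟩
      continuousOn := fun x _ => by have := hg.continuous; fun_prop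
      norm_le := fun t _ x _ => hgM _
      mul_max_le := by simp }
  obtain ⟨u, hu₀, hu⟩ := hPL.exists_eq_forall_mem_Icc_hasDerivWithinAt₀
  exact ⟨u, fun t => g (t, u t), hu₀, fun t ht =>
    ⟨(hu t (Ioo_subset_Icc_self ht)).hasDerivAt (Icc_mem_nhds ht.1 ht.2), hgf _⟩⟩

theorem exists_forall_mem_Ioo_hasDerivAt_of_continuous_of_bounded {f : ℝ × E → E} {M T : ℝ}
    (hf : Continuous f) (hM : ∀ p, ‖f p‖ ≤ M) (hT : 0 < T) (t₀ : ℝ) (x₀ : E) :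
    ∃ φ : ℝ → E, φ t₀ = x₀ ∧ ∀ t ∈ Ioo (t₀ - T) (t₀ + T), HasDerivAt φ (f (t, φ t)) t := by
  set J := Ioo (t₀ - T) (t₀ + T)
  have ht₀ : t₀ ∈ J := by simp [J, hT]
  have hJconv : Convex ℝ J := convex_Ioo _ _
  choose u u' hu₀ hu hdefect using fun k : ℕ =>
    exists_approx_solution hf hM hT.le (Nat.one_div_pos_of_nat (n := k)) t₀ x₀
  have hu'M (k : ℕ) (t : ℝ) (ht : t ∈ J) : ‖u' k t‖ ≤ M + 1 := by
    have h := norm_le_norm_add_norm_sub' (u' k t) (f (t, u k t))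
    have hk : 1 / ((k : ℝ) + 1) ≤ 1 := div_le_one_of_le₀ (by simp) (by positivity)
    linarith [hM (t, u k t), hdefect k t ht]
  have hbound (k : ℕ) (t : ℝ) (ht : t ∈ J) : u k t ∈ closedBall x₀ ((M + 1) * ‖t - t₀‖) := by
    rw [mem_closedBall, dist_eq_norm, ← hu₀ k]
    exact hJconv.norm_image_sub_le_of_norm_hasDerivWithin_le
      (fun s hs => (hu k s hs).hasDerivWithinAt) (hu'M k) ht₀ ht
  have hlim (t : ℝ) (ht : t ∈ J) : ∃ x, Tendsto (u · t) (hyperfilter ℕ) (𝓝 x) := by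
    obtain ⟨x, -, hx⟩ := (isCompact_closedBall x₀ _).ultrafilter_le_nhds
      ((hyperfilter ℕ).map (u · t))
      (tendsto_principal.2 (Eventually.of_forall fun k => hbound k t ht))
    exact ⟨x, hx⟩
  choose! φ hφ using hlim
  refine ⟨φ, tendsto_nhds_unique (hφ t₀ ht₀) (by simp [hu₀]), fun t ht => ?_⟩
  refine hasDerivAt_of_tendsto_approx_solutions isOpen_Ioo hJconv ht hu hu'M ?_ hφ hf.continuousAt
  refine squeeze_zero_norm' (a := fun p : ℕ × ℝ => 1 / ((p.1 : ℝ) + 1)) ?_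
    ((tendsto_one_div_add_atTop_nhds_zero_nat.mono_left Nat.hyperfilter_le_atTop).comp tendsto_fst)
  filter_upwards [tendsto_snd.eventually (isOpen_Ioo.mem_nhds ht)] with p hp
  exact (hdefect p.1 p.2 hp).le

theorem exists_eventually_hasDerivAt_of_eventually_continuousAt {f : ℝ × E → E} {t₀ : ℝ} {x₀ : E}
    (hf : ∀ᶠ p in 𝓝 (t₀, x₀), ContinuousAt f p) :
    ∃ φ : ℝ → E, φ t₀ = x₀ ∧ ∀ᶠ t in 𝓝 t₀, HasDerivAt φ (f (t, φ t)) t := by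
  obtain ⟨r, hr, hball⟩ := Metric.eventually_nhds_iff_ball.mp hf
  let χ : ContDiffBump (t₀, x₀) := ⟨r / 3, r / 2, by positivity, by linarith⟩
  have hsupp : tsupport (fun p => χ p • f p) ⊆ closedBall (t₀, x₀) (r / 2) :=
    (tsupport_smul_subset_left _ _).trans χ.tsupport_eq.subset
  have hcont : Continuous fun p => χ p • f p := continuous_of_tsupport fun p hp =>
    χ.continuous.continuousAt.smul
      (hball p (closedBall_subset_ball (by linarith) (hsupp hp)))
  have hcompact : HasCompactSupport fun p => χ p • f p := χ.hasCompactSupport.smul_right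
  obtain ⟨M, hM⟩ := hcont.bounded_above_of_compact_support hcompact
  obtain ⟨φ, hφ₀, hφ⟩ :=
    exists_forall_mem_Ioo_hasDerivAt_of_continuous_of_bounded hcont hM zero_lt_one t₀ x₀
  have ht₀ : t₀ ∈ Ioo (t₀ - 1) (t₀ + 1) := by simp
  have hgraph : Tendsto (fun t => (t, φ t)) (𝓝 t₀) (𝓝 (t₀, x₀)) := by
    simpa [hφ₀] using (continuousAt_id.prodMk (hφ t₀ ht₀).continuousAt).tendsto
  refine ⟨φ, hφ₀, ?_⟩
  filter_upwards [Ioo_mem_nhds ht₀.1 ht₀.2, hgraph.eventually χ.eventuallyEq_one] with t ht hχ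
  simpa [hχ] using hφ t ht

end Peano

section ImplicitFunction

variable {P X Y : Type*} [TopologicalSpace P] [NormedAddCommGroup X] [NormedSpace ℝ X]
  [FiniteDimensional ℝ X] [NormedAddCommGroup Y] [NormedSpace ℝ Y] {F : P × X → Y} {O : Set P}
  {W : Set X} {s₁ : P} {y₁ : X}

theorem exists_mem_nhds_eventually_injOn (hO : IsOpen O) (hW : IsOpen W)
    (hF : ContinuousOn F (O ×ˢ W))
    (hreg : ∀ s ∈ O, ∀ y ∈ W, IsRegularAt (fun y => F (s, y)) y)
    (hs₁ : s₁ ∈ O) (hy₁ : y₁ ∈ W) (h0 : F (s₁, y₁) = 0) :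
    ∃ B ∈ 𝓝 y₁, ∀ᶠ s in 𝓝 s₁, InjOn (fun y => F (s, y)) B := by
  have hcont : ∀ y ∈ W, ContinuousAt F (s₁, y) := fun y hy =>
    hF.continuousAt ((hO.prod hW).mem_nhds ⟨hs₁, hy⟩)
  obtain ⟨R, hR, hRW, m, hm, hsphere⟩ := exists_closedBall_subset_eventually_lt_norm_on_sphere
    (hW.mem_nhds hy₁) hcont (hreg s₁ hs₁ y₁ hy₁) h0
  have hsmall : ∀ᶠ p in 𝓝 s₁ ×ˢ 𝓝 y₁, ‖F p‖ < m := by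
    rw [← nhds_prod_eq]
    exact (hcont y₁ hy₁).norm.eventually (gt_mem_nhds (by simpa [h0] using hm))
  obtain ⟨N, hN, Q, hQ, hNQ⟩ := eventually_prod_iff.1 hsmall
  obtain ⟨ρ, hρ, hρQ⟩ := nhds_basis_ball.mem_iff.1 (inter_mem hQ (closedBall_mem_nhds y₁ hR))
  refine ⟨ball y₁ ρ, ball_mem_nhds y₁ hρ, ?_⟩
  filter_upwards [hsphere, hN, hO.mem_nhds hs₁] with s hs_sphere hsN hsO
  have hcov : IsCoveringMapOn ((closedBall y₁ R).domRestrict fun y => F (s, y)) (ball 0 m) :=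
    isCoveringMapOn_restrict_closedBall (fun y hy => hreg s hsO y (hRW hy))
      (fun y hy hym => (hs_sphere y hy).not_gt (mem_ball_zero_iff.1 hym))
      fun y hy => subset_locallyInjectiveSet_of_forall_isRegularAt hW (hreg s hsO) (hRW hy.1)
  have := simplyConnectedSpace_ball (0 : Y) hm
  have := locallyPathConnectedSpace_ball (0 : Y) m
  exact injOn_of_isCoveringMapOn_restrict hcov (convex_ball y₁ ρ).isPreconnected
    (fun y hy => (hρQ hy).2) fun y hy => mem_ball_zero_iff.2 (hNQ hsN (hρQ hy).1)

theorem exists_implicit_function (hO : IsOpen O) (hW : IsOpen W)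
    (hF : ContinuousOn F (O ×ˢ W))
    (hreg : ∀ s ∈ O, ∀ y ∈ W, IsRegularAt (fun y => F (s, y)) y)
    (hs₁ : s₁ ∈ O) (hy₁ : y₁ ∈ W) (h0 : F (s₁, y₁) = 0) :
    ∃ g : P → X, g s₁ = y₁ ∧ ∀ᶠ s in 𝓝 s₁, g s ∈ W ∧ F (s, g s) = 0 ∧ ContinuousAt g s := by
  have hexists : ∀ s ∈ O, ∀ y ∈ W, F (s, y) = 0 → ∀ U ∈ 𝓝 y, ∀ᶠ s' in 𝓝 s,
      ∃ y' ∈ U ∩ W, F (s', y') = 0 := fun s hs y hy hsy U hU =>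
    eventually_exists_mem_eq_zero (inter_mem hU (hW.mem_nhds hy))
      (fun y' hy' => hF.continuousAt ((hO.prod hW).mem_nhds ⟨hs, hy'.2⟩))
      ((hO.eventually_mem hs).mono fun s' hs' y' hy' => hreg s' hs' y' hy'.2) hsy
  obtain ⟨B, hB, hinj⟩ := exists_mem_nhds_eventually_injOn hO hW hF hreg hs₁ hy₁ h0
  obtain ⟨N, hN, hNopen, hs₁N⟩ := eventually_nhds_iff.1 <| (hO.eventually_mem hs₁).and <|
    hinj.and (hexists s₁ hs₁ y₁ hy₁ h0 _ (interior_mem_nhds.2 hB))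
  choose! g hg using fun s hs => (hN s hs).2.2
  have hunique : ∀ s ∈ N, ∀ y ∈ B, F (s, y) = 0 → y = g s := fun s hs y hy hsy =>
    (hN s hs).2.1 hy (interior_subset (hg s hs).1.1) (hsy.trans (hg s hs).2.symm)
  refine ⟨g, (hunique s₁ hs₁N y₁ (mem_of_mem_nhds hB) h0).symm, ?_⟩
  filter_upwards [hNopen.mem_nhds hs₁N] with s hs
  obtain ⟨⟨hgB, hgW⟩, hg0⟩ := hg s hs
  refine ⟨hgW, hg0, fun U hU => mem_map.2 ?_⟩
  filter_upwards [hexists s (hN s hs).1 (g s) hgW hg0 _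
    (inter_mem hU (mem_interior_iff_mem_nhds.1 hgB)), hNopen.mem_nhds hs]
    with s' ⟨y, ⟨⟨hyU, hyB⟩, _⟩, hsy⟩ hs'
  exact mem_preimage.2 (hunique s' hs' y hyB hsy ▸ hyU)

end ImplicitFunction

theorem implicit_ode_solution_general {E Y : Type*} [NormedAddCommGroup E] [NormedSpace ℝ E]
    [FiniteDimensional ℝ E] [NormedAddCommGroup Y] [NormedSpace ℝ Y] {I : Set ℝ} {V W : Set E}
    (hI : IsOpen I) (hV : IsOpen V) (hW : IsOpen W) {t₀ : ℝ} {x₀ y₀ : E}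
    (ht₀ : t₀ ∈ I) (hx₀ : x₀ ∈ V) (hy₀ : y₀ ∈ W) (F : ℝ × E × E → Y)
    (hF : ContinuousOn F (I ×ˢ V ×ˢ W)) (hF0 : F (t₀, x₀, y₀) = 0)
    (hreg : ∀ t ∈ I, ∀ x ∈ V, ∀ y ∈ W, IsRegularAt (fun y' => F (t, x, y')) y) :
    ∃ ε > (0 : ℝ), ∃ φ φ' : ℝ → E, φ t₀ = x₀ ∧ φ' t₀ = y₀ ∧ ∀ t ∈ Ioo (t₀ - ε) (t₀ + ε),
      HasDerivAt φ (φ' t) t ∧ φ t ∈ V ∧ φ' t ∈ W ∧ F (t, φ t, φ' t) = 0 := by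
  have hFassoc : ContinuousOn (fun p : (ℝ × E) × E => F (p.1.1, p.1.2, p.2)) ((I ×ˢ V) ×ˢ W) :=
    hF.comp (by fun_prop) fun p hp => ⟨hp.1.1, hp.1.2, hp.2⟩
  obtain ⟨g, hg₀, hg⟩ := exists_implicit_function (s₁ := (t₀, x₀)) (hI.prod hV) hW
    hFassoc (fun s hs y hy => hreg s.1 hs.1 s.2 hs.2 y hy) ⟨ht₀, hx₀⟩ hy₀ hF0
  obtain ⟨φ, rfl, hφ⟩ :=
    exists_eventually_hasDerivAt_of_eventually_continuousAt (hg.mono fun _ h => h.2.2)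
  have hφ₀ : ContinuousAt φ t₀ := hφ.self_of_nhds.continuousAt
  have hsol : ∀ᶠ t in 𝓝 t₀, g (t, φ t) ∈ W ∧ F (t, φ t, g (t, φ t)) = 0 :=
    ((continuousAt_id.prodMk hφ₀).eventually hg).mono fun _ h => ⟨h.1, h.2.1⟩
  obtain ⟨ε, hε, hball⟩ := Metric.eventually_nhds_iff_ball.1
    (hφ.and ((hφ₀.eventually (hV.mem_nhds hx₀)).and hsol))
  rw [Real.ball_eq_Ioo] at hball
  exact ⟨ε, hε, φ, fun t => g (t, φ t), rfl, hg₀, hball⟩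

/-- Existence of solutions of the implicit ODE `F (t, x, x') = 0` when, for each `(t, x)`,
the map `y ↦ F (t, x, y)` is differentiable without critical points. -/
theorem implicit_ode_solution
    {n : ℕ} {I : Set ℝ} {V W : Set (EuclideanSpace ℝ (Fin n))}
    (hI : IsOpen I) (hV : IsOpen V) (hW : IsOpen W)
    {t₀ : ℝ} {x₀ y₀ : EuclideanSpace ℝ (Fin n)}
    (ht₀ : t₀ ∈ I) (hx₀ : x₀ ∈ V) (hy₀ : y₀ ∈ W)
    (F : ℝ × EuclideanSpace ℝ (Fin n) × EuclideanSpace ℝ (Fin n) → EuclideanSpace ℝ (Fin n))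
    (hF : ContinuousOn F (I ×ˢ V ×ˢ W))
    (hF0 : F (t₀, x₀, y₀) = 0)
    (hdiff : ∀ t ∈ I, ∀ x ∈ V, ∀ y ∈ W,
      ∃ D : EuclideanSpace ℝ (Fin n) →L[ℝ] EuclideanSpace ℝ (Fin n),
        HasFDerivAt (fun y' => F (t, x, y')) D y ∧ Function.Bijective D) :
    ∃ ε > (0 : ℝ), ∃ φ φ' : ℝ → EuclideanSpace ℝ (Fin n),
      φ t₀ = x₀ ∧ φ' t₀ = y₀ ∧
      ∀ t ∈ Set.Ioo (t₀ - ε) (t₀ + ε),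
        HasDerivAt φ (φ' t) t ∧ φ t ∈ V ∧ φ' t ∈ W ∧ F (t, φ t, φ' t) = 0 :=
  implicit_ode_solution_general hI hV hW ht₀ hx₀ hy₀ F hF hF0 hdiff
end

section
/- (Differentiable Darboux theorem.) Let U be an open connected subset of ℝⁿ and let f : U → ℝⁿ be differentiable, i.e. at every x ∈ U there is a continuous linear map f′(x) : ℝⁿ → ℝⁿ with HasFDerivAt f (f′(x)) x. Suppose there exist α ∈ ℝ and points x₀, x₁ ∈ U such that det(f′(x₀) − α·id) < 0 and det(f′(x₁) − α·id) > 0. Then there exists x₂ ∈ U such that det(f′(x₂) − α·id) = 0 (i.e. α is an eigenvalue of f′(x₂)). -/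
/-!
Let `u` be differentiable, Lipschitz and compactly supported. For polynomial `φ` the integral of
`φ (x + t u(x)) det (id + t u'(x))` is polynomial in `t` and, by the change of variables formula,
constant for small `t`; hence it is constant, and by density `∫ φ (x + u x) det (id + u' x) = ∫ φ`
for all continuous `φ`. So `id + u` has positive Jacobian at some point over every open set.

A differentiable map need not be locally Lipschitz, but by Baire category it is Lipschitz near the
whole fibre of a generic value, so the perturbation can be cut off to a Lipschitz one. Baire
category also gives, if `det f'` never vanishes but changes sign, a point of the boundary between
the two sign regions at which the restriction of `f'` to this boundary is continuous. A ball inside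
one sign region touching a boundary point of the other sign, near which `f` is close to its
linearization, then contradicts the positivity statement.
-/

open Metric Set Filter Topology MeasureTheory Polynomial
open scoped NNReal Manifold

section VolumeIdentity

variable {E : Type*} [NormedAddCommGroup E] [NormedSpace ℝ E]

/-- The algebra of continuous functions that are polynomial along every line, with a degree bound
uniform over the lines. It stands in for the polynomial functions on `E`, without coordinates. -/
def polynomialOnLines (E : Type*) [NormedAddCommGroup E] [NormedSpace ℝ E] :
    Subalgebra ℝ C(E, ℝ) where
  carrier := {φ | ∃ D : ℕ, ∀ a v : E, ∃ P : ℝ[X], P.natDegree ≤ D ∧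
    ∀ t : ℝ, P.eval t = φ (a + t • v)}
  mul_mem' := by
    rintro φ ψ ⟨D, hφ⟩ ⟨D', hψ⟩
    refine ⟨D + D', fun a v => ?_⟩
    obtain ⟨P, hP, hPφ⟩ := hφ a v
    obtain ⟨Q, hQ, hQψ⟩ := hψ a v
    exact ⟨P * Q, natDegree_mul_le_of_le hP hQ, fun t => by simp [hPφ, hQψ]⟩
  add_mem' := by
    rintro φ ψ ⟨D, hφ⟩ ⟨D', hψ⟩
    refine ⟨max D D', fun a v => ?_⟩
    obtain ⟨P, hP, hPφ⟩ := hφ a v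
    obtain ⟨Q, hQ, hQψ⟩ := hψ a v
    exact ⟨P + Q, natDegree_add_le_of_le hP hQ, fun t => by simp [hPφ, hQψ]⟩
  algebraMap_mem' r := ⟨0, fun _ _ => ⟨C r, by simp, by simp⟩⟩

theorem coe_mem_polynomialOnLines (l : E →L[ℝ] ℝ) : (l : C(E, ℝ)) ∈ polynomialOnLines E :=
  ⟨1, fun a v => ⟨C (l a) + C (l v) * X, by compute_degree, fun t => by simp [mul_comm t]⟩⟩

theorem separatesPoints_polynomialOnLines : (polynomialOnLines E).SeparatesPoints := by
  intro x y hxy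
  obtain ⟨l, hl⟩ := SeparatingDual.exists_separating_of_ne (R := ℝ) hxy
  exact ⟨l, ⟨l, coe_mem_polynomialOnLines l, rfl⟩, hl⟩

theorem exists_polynomial_eval_eq_integral {X : Type*} [MeasurableSpace X] {μ : Measure X}
    {F : ℝ → X → ℝ} {D : ℕ} (hF : ∀ t, Integrable (F t) μ)
    (hpoly : ∀ x, ∃ P : ℝ[X], P.natDegree ≤ D ∧ ∀ t, P.eval t = F t x) :
    ∃ Q : ℝ[X], ∀ t, Q.eval t = ∫ x, F t x ∂μ := by
  let nodes := Finset.range (D + 1)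
  let node : ℕ → ℝ := (↑)
  have hnode : InjOn node nodes := Nat.cast_injective.injOn
  have hinterp : ∀ t x,
      F t x = ∑ i ∈ nodes, F (node i) x * (Lagrange.basis nodes node i).eval t := by
    intro t x
    obtain ⟨P, hPdeg, hP⟩ := hpoly x
    have hdeg : P.degree < nodes.card := by
      rw [Finset.card_range]
      exact degree_le_natDegree.trans_lt (by exact_mod_cast Nat.lt_succ_of_le hPdeg)
    have := congrArg (eval t) (Lagrange.eq_interpolate hnode hdeg)
    simpa [Lagrange.interpolate_apply, eval_finsetSum, hP] using this
  refine ⟨∑ i ∈ nodes, C (∫ x, F (node i) x ∂μ) * Lagrange.basis nodes node i, fun t => ?_⟩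
  simp_rw [hinterp t]
  rw [integral_finsetSum _ fun i _ => (hF (node i)).mul_const _]
  simp [eval_finsetSum, integral_mul_const]

theorem bijective_id_add_of_lipschitzWith [CompleteSpace E] {u : E → E} {K : ℝ≥0}
    (hu : LipschitzWith K u) (hK : K < 1) : Function.Bijective fun x => x + u x := by
  have happrox : ApproximatesLinearOn (fun x => x + u x)
      (ContinuousLinearEquiv.refl ℝ E : E →L[ℝ] E) univ K := by
    intro x _ y _
    simpa [add_sub_add_comm] using hu.norm_sub_le x y
  have hK' : Subsingleton E ∨
      K < ‖((ContinuousLinearEquiv.refl ℝ E).symm : E →L[ℝ] E)‖₊⁻¹ := by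
    refine (subsingleton_or_nontrivial E).imp_right fun (_ : Nontrivial E) => ?_
    rwa [ContinuousLinearEquiv.refl_symm, ContinuousLinearEquiv.coe_refl,
      ContinuousLinearMap.nnnorm_id, inv_one]
  exact ⟨injOn_univ.1 (happrox.injOn hK'), happrox.surjective hK'⟩

variable [FiniteDimensional ℝ E]

theorem exists_polynomial_eval_eq_det_id_add_smul (A : E →L[ℝ] E) :
    ∃ P : ℝ[X], P.natDegree ≤ Module.finrank ℝ E ∧
      ∀ t : ℝ, P.eval t = (.id ℝ E + t • A : E →L[ℝ] E).det := by
  let b := Module.finBasis ℝ E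
  let M := LinearMap.toMatrix b b (A : E →ₗ[ℝ] E)
  refine ⟨Matrix.det ((X : ℝ[X]) • M.map C + (1 : Matrix _ _ ℝ).map C),
    by simpa using natDegree_det_X_add_C_le M 1, fun t => ?_⟩
  have hdet : (.id ℝ E + t • A : E →L[ℝ] E).det = Matrix.det (1 + t • M) := by
    rw [ContinuousLinearMap.det, ← LinearMap.det_toMatrix b]
    congr 1
    simp [M]
  rw [hdet, ← coe_evalRingHom, RingHom.map_det]
  congr 1
  ext i j
  simp [Matrix.one_apply, apply_ite, add_comm, mul_comm t]

theorem det_id_add_pos {A : E →L[ℝ] E} (hA : ‖A‖ < 1) :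
    0 < (.id ℝ E + A : E →L[ℝ] E).det := by
  have hne : ∀ t ∈ Icc (0 : ℝ) 1, (.id ℝ E + t • A : E →L[ℝ] E).det ≠ 0 := by
    intro t ht
    have hnorm : ‖-(t • A)‖ < 1 := by
      rw [norm_neg, norm_smul, Real.norm_of_nonneg ht.1]
      exact (mul_le_of_le_one_left (norm_nonneg A) ht.2).trans_lt hA
    have hunit : IsUnit (.id ℝ E + t • A : E →L[ℝ] E) := by
      simpa [ContinuousLinearMap.one_def] using isUnit_one_sub_of_norm_lt_one hnorm
    exact ((LinearMap.isUnit_iff_isUnit_det _).1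
      (hunit.map ContinuousLinearMap.toLinearMapRingHom)).ne_zero
  by_contra! hneg
  have hcont : Continuous fun t : ℝ => (.id ℝ E + t • A : E →L[ℝ] E).det :=
    ContinuousLinearMap.continuous_det.comp (by fun_prop)
  obtain ⟨t, ht, hzero⟩ := intermediate_value_Icc' zero_le_one hcont.continuousOn
    (show (0 : ℝ) ∈ Icc _ _ from ⟨by simpa using hneg, by simp [ContinuousLinearMap.det]⟩)
  exact hne t ht hzero

theorem exists_forall_abs_det_le (M : ℝ) : ∃ D : ℝ, ∀ A : E →L[ℝ] E, ‖A‖ ≤ M → |A.det| ≤ D := by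
  have : ProperSpace (E →L[ℝ] E) := FiniteDimensional.proper ℝ _
  obtain ⟨D, hD⟩ := (isCompact_closedBall (0 : E →L[ℝ] E) M).exists_bound_of_continuousOn
    ContinuousLinearMap.continuous_det.continuousOn
  exact ⟨D, fun A hA => hD A (by simpa using hA)⟩

theorem exists_forall_abs_det_id_add_fderiv_le {u : E → E} {K : ℝ≥0} (hu : LipschitzWith K u) :
    ∃ D : ℝ, ∀ x, |(.id ℝ E + fderiv ℝ u x : E →L[ℝ] E).det| ≤ D := by
  obtain ⟨D, hD⟩ := exists_forall_abs_det_le (E := E) (1 + K)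
  exact ⟨D, fun x => hD _ (norm_add_le_of_le ContinuousLinearMap.norm_id_le
    (norm_fderiv_le_of_lipschitz ℝ hu))⟩

section Measure

variable [MeasurableSpace E] {u : E → E} {K : ℝ≥0} {s : Set E}

theorem exists_forall_abs_setIntegral_comp_id_add_mul_det_sub_le (μ : Measure E)
    [IsFiniteMeasureOnCompacts μ] (hu : LipschitzWith K u) (hs : Bornology.IsBounded s) :
    ∃ c : ℝ, ∀ (φ : E → ℝ) (ε : ℝ), (∀ x ∈ s, |φ x| ≤ ε ∧ |φ (x + u x)| ≤ ε) →
      |∫ x in s, φ (x + u x) * (.id ℝ E + fderiv ℝ u x : E →L[ℝ] E).det - φ x ∂μ| ≤ c * ε := by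
  have : ProperSpace E := FiniteDimensional.proper ℝ E
  obtain ⟨D, hD⟩ := exists_forall_abs_det_id_add_fderiv_le hu
  refine ⟨(D + 1) * μ.real s, fun φ ε hφ => ?_⟩
  rw [mul_right_comm, ← Real.norm_eq_abs]
  refine norm_setIntegral_le_of_norm_le_const hs.measure_lt_top fun x hx => ?_
  obtain ⟨hφx, hφux⟩ := hφ x hx
  calc ‖φ (x + u x) * (.id ℝ E + fderiv ℝ u x : E →L[ℝ] E).det - φ x‖
      ≤ |φ (x + u x)| * |(.id ℝ E + fderiv ℝ u x : E →L[ℝ] E).det| + |φ x| := by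
        rw [← abs_mul]
        exact abs_sub _ _
    _ ≤ ε * D + ε := by
        gcongr
        · exact (abs_nonneg _).trans hφx
        · exact hD x
    _ = (D + 1) * ε := by ring

variable [BorelSpace E]

theorem integrableOn_comp_id_add_mul_det (μ : Measure E) [IsFiniteMeasureOnCompacts μ]
    (hu : LipschitzWith K u) (hs : Bornology.IsBounded s) {φ : E → ℝ} (hφ : Continuous φ) :
    IntegrableOn (fun x => φ (x + u x) * (.id ℝ E + fderiv ℝ u x : E →L[ℝ] E).det) s μ := by
  have : ProperSpace E := FiniteDimensional.proper ℝ E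
  obtain ⟨D, hD⟩ := exists_forall_abs_det_id_add_fderiv_le hu
  have hmeas : Measurable fun x => (.id ℝ E + fderiv ℝ u x : E →L[ℝ] E).det :=
    ContinuousLinearMap.continuous_det.measurable.comp ((measurable_fderiv ℝ u).const_add _)
  have hint : IntegrableOn (fun x => φ (x + u x)) s μ :=
    ((hφ.comp (continuous_id.add hu.continuous)).continuousOn.integrableOn_compact
      hs.isCompact_closure).mono_set subset_closure
  exact hint.mul_bdd hmeas.aestronglyMeasurable (ae_of_all _ hD)

variable (μ : Measure E) [μ.IsAddHaarMeasure]

theorem setIntegral_comp_id_add_mul_det_of_lt_one (hu : LipschitzWith K u) (hK : K < 1)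
    (hdiff : Differentiable ℝ u) (hs : MeasurableSet s) (hsu : ∀ x ∉ s, u x = 0) (φ : E → ℝ) :
    ∫ x in s, φ (x + u x) * (.id ℝ E + fderiv ℝ u x : E →L[ℝ] E).det ∂μ = ∫ x in s, φ x ∂μ := by
  have hbij := bijective_id_add_of_lipschitzWith hu hK
  have hfix : ∀ x ∉ s, x + u x = x := fun x hx => by rw [hsu x hx, add_zero]
  have himage : (fun x => x + u x) '' s = s := by
    have hcompl : (fun x => x + u x) '' sᶜ = sᶜ := by
      simpa using image_congr (s := sᶜ) hfix
    rw [← compl_inj_iff, ← image_compl_eq hbij, hcompl]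
  have hchange := integral_image_eq_integral_abs_det_fderiv_smul μ hs
    (fun x _ => ((hasFDerivAt_id x).add (hdiff x).hasFDerivAt).hasFDerivWithinAt)
    hbij.injective.injOn φ
  change ∫ x in (fun x => x + u x) '' s, φ x ∂μ = ∫ x in s, |_| • φ (x + u x) ∂μ at hchange
  rw [himage] at hchange
  rw [hchange]
  refine setIntegral_congr_fun hs fun x _ => ?_
  have hpos := det_id_add_pos ((norm_fderiv_le_of_lipschitz ℝ hu (x₀ := x)).trans_lt hK)
  rw [smul_eq_mul, abs_of_pos hpos, mul_comm]

theorem setIntegral_comp_id_add_mul_det_of_mem_polynomialOnLines (hu : LipschitzWith K u)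
    (hdiff : Differentiable ℝ u) (hs : MeasurableSet s) (hsb : Bornology.IsBounded s)
    (hsu : ∀ x ∉ s, u x = 0) {φ : C(E, ℝ)} (hφ : φ ∈ polynomialOnLines E) :
    ∫ x in s, φ (x + u x) * (.id ℝ E + fderiv ℝ u x : E →L[ℝ] E).det ∂μ = ∫ x in s, φ x ∂μ := by
  have hlip : ∀ t : ℝ, LipschitzWith (‖t‖₊ * K) (t • u) := fun t =>
    (lipschitzWith_smul t).comp hu
  have hfderiv : ∀ (t : ℝ) x, fderiv ℝ (t • u) x = t • fderiv ℝ u x := fun t x =>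
    fderiv_const_smul (hdiff x) t
  obtain ⟨Q, hQ⟩ : ∃ Q : ℝ[X], ∀ t, Q.eval t = ∫ x in s,
      φ (x + (t • u) x) * (.id ℝ E + fderiv ℝ (t • u) x : E →L[ℝ] E).det ∂μ := by
    obtain ⟨D, hD⟩ := hφ
    refine exists_polynomial_eval_eq_integral (D := D + Module.finrank ℝ E)
      (fun t => integrableOn_comp_id_add_mul_det μ (hlip t) hsb φ.continuous) fun x => ?_
    obtain ⟨P, hPdeg, hP⟩ := hD x (u x)
    obtain ⟨P', hPdeg', hP'⟩ := exists_polynomial_eval_eq_det_id_add_smul (fderiv ℝ u x)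
    exact ⟨P * P', natDegree_mul_le_of_le hPdeg hPdeg', fun t => by simp [hP, hP', hfderiv]⟩
  have hsmall : ∀ t ∈ Ioo (0 : ℝ) (K + 1)⁻¹, Q.eval t = (C (∫ x in s, φ x ∂μ)).eval t := by
    intro t ht
    have hK : ‖t‖₊ * K < 1 := by
      have htK : t * (K + 1) < 1 := by
        simpa using (lt_div_iff₀ (by positivity)).1 (ht.2.trans_eq (one_div _).symm)
      rw [← NNReal.coe_lt_coe, NNReal.coe_mul, coe_nnnorm, Real.norm_of_nonneg ht.1.le]
      push_cast
      linarith [ht.1]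
    rw [hQ, eval_C]
    exact setIntegral_comp_id_add_mul_det_of_lt_one μ (hlip t) hK (hdiff.const_smul t) hs
      (fun x hx => by simp [hsu x hx]) φ
  have hconst : Q = C (∫ x in s, φ x ∂μ) :=
    eq_of_infinite_eval_eq _ _ ((Ioo_infinite (by positivity)).mono hsmall)
  simpa [hconst] using (hQ 1).symm

theorem setIntegral_comp_id_add_mul_det (hu : LipschitzWith K u)
    (hdiff : Differentiable ℝ u) (hs : MeasurableSet s) (hsb : Bornology.IsBounded s)
    (hsu : ∀ x ∉ s, u x = 0) {φ : E → ℝ} (hφ : Continuous φ) :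
    ∫ x in s, φ (x + u x) * (.id ℝ E + fderiv ℝ u x : E →L[ℝ] E).det ∂μ = ∫ x in s, φ x ∂μ := by
  have : ProperSpace E := FiniteDimensional.proper ℝ E
  set J : E → ℝ := fun x => (.id ℝ E + fderiv ℝ u x : E →L[ℝ] E).det
  obtain ⟨c, hc⟩ := exists_forall_abs_setIntegral_comp_id_add_mul_det_sub_le μ hu hsb
  have hint : ∀ {ψ : E → ℝ}, Continuous ψ → IntegrableOn (fun x => ψ (x + u x) * J x) s μ :=
    integrableOn_comp_id_add_mul_det μ hu hsb
  have hint' : ∀ {ψ : E → ℝ}, Continuous ψ → IntegrableOn ψ s μ := fun hψ =>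
    (hψ.continuousOn.integrableOn_compact hsb.isCompact_closure).mono_set subset_closure
  rw [← sub_eq_zero, ← integral_sub (hint hφ) (hint' hφ)]
  by_contra hne
  obtain ⟨ε, hε, hlt⟩ := exists_pos_mul_lt (abs_pos.2 hne) c
  have hcompact : IsCompact (closure s ∪ (fun x => x + u x) '' closure s) :=
    hsb.isCompact_closure.union
      (hsb.isCompact_closure.image (continuous_id.add hu.continuous))
  obtain ⟨ψ, hψ, hψφ⟩ :=
    ContinuousMap.exists_mem_subalgebra_near_continuous_of_isCompact_of_separatesPoints
      separatesPoints_polynomialOnLines ⟨φ, hφ⟩ hcompact hε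
  have hdefect : ∫ x in s, (ψ (x + u x) - φ (x + u x)) * J x - (ψ x - φ x) ∂μ =
      -∫ x in s, φ (x + u x) * J x - φ x ∂μ := by
    have hψ_defect : ∫ x in s, ψ (x + u x) * J x - ψ x ∂μ = 0 := by
      rw [integral_sub (hint ψ.continuous) (hint' ψ.continuous), sub_eq_zero]
      exact setIntegral_comp_id_add_mul_det_of_mem_polynomialOnLines μ hu hdiff hs hsb hsu hψ
    simp_rw [sub_mul, sub_sub_sub_comm]
    rw [integral_sub ((hint ψ.continuous).sub' (hint' ψ.continuous))
      ((hint hφ).sub' (hint' hφ)), hψ_defect, zero_sub]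
  have hle := hc (fun x => ψ x - φ x) ε fun x hx =>
    ⟨(hψφ x (.inl (subset_closure hx))).le,
      (hψφ _ (.inr (mem_image_of_mem _ (subset_closure hx)))).le⟩
  rw [hdefect, abs_neg] at hle
  exact hle.not_gt hlt

end Measure

theorem exists_id_add_mem_and_det_pos {u : E → E} {K : ℝ≥0} (hu : LipschitzWith K u)
    (hdiff : Differentiable ℝ u) (hsupp : HasCompactSupport u) {V : Set E} (hV : IsOpen V)
    (hVne : V.Nonempty) :
    ∃ x, x + u x ∈ V ∧ 0 < (.id ℝ E + fderiv ℝ u x : E →L[ℝ] E).det := by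
  borelize E
  by_contra! hneg
  obtain ⟨y, hy⟩ := hVne
  obtain ⟨φ, hφV, hφsupp, hφ, hφ01, hφy⟩ :=
    exists_contDiff_tsupport_subset (n := 0) (hV.mem_nhds hy)
  have hφ_nonneg : ∀ x, 0 ≤ φ x := fun x => (hφ01 (mem_range_self x)).1
  let s := tsupport u ∪ tsupport φ
  have hs : IsCompact s := hsupp.isCompact.union hφsupp.isCompact
  have hsu : ∀ x ∉ s, u x = 0 := fun x hx => image_eq_zero_of_notMem_tsupport fun h => hx (.inl h)
  have hsφ : ∀ x ∉ s, φ x = 0 := fun x hx => image_eq_zero_of_notMem_tsupport fun h => hx (.inr h)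
  have hnonpos : ∀ x, φ (x + u x) * (.id ℝ E + fderiv ℝ u x : E →L[ℝ] E).det ≤ 0 := by
    intro x
    by_cases hx : x + u x ∈ V
    · exact mul_nonpos_of_nonneg_of_nonpos (hφ_nonneg _) (hneg x hx)
    · rw [image_eq_zero_of_notMem_tsupport fun h => hx (hφV h), zero_mul]
  refine (integral_nonpos (μ := Measure.addHaar.restrict s) hnonpos).not_gt ?_
  rw [setIntegral_comp_id_add_mul_det Measure.addHaar hu hdiff hs.measurableSet hs.isBounded hsu
    hφ.continuous, setIntegral_eq_integral_of_forall_compl_eq_zero hsφ]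
  exact hφ.continuous.integral_pos_of_hasCompactSupport_nonneg_nonzero hφsupp hφ_nonneg
    (hφy.trans_ne one_ne_zero)

end VolumeIdentity

section LipschitzLocus

/-- The points near which `f` is Lipschitz: the part of the domain where a merely differentiable
map can be deformed to a Lipschitz one without being changed. -/
def lipschitzLocus {X Y : Type*} [PseudoEMetricSpace X] [PseudoEMetricSpace Y] (f : X → Y) :
    Set X :=
  {x | ∃ K, ∃ s ∈ 𝓝 x, LipschitzOnWith K f s}

theorem isOpen_lipschitzLocus {X Y : Type*} [PseudoEMetricSpace X] [PseudoEMetricSpace Y]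
    (f : X → Y) : IsOpen (lipschitzLocus f) :=
  isOpen_iff_mem_nhds.2 fun _ ⟨K, s, hs, hf⟩ =>
    (eventually_mem_nhds_iff.2 hs).mono fun _ hz => ⟨K, s, hz, hf⟩

theorem mem_lipschitzLocus_congr {X Y : Type*} [PseudoEMetricSpace X] [PseudoEMetricSpace Y]
    {f g : X → Y} {x : X} (hfg : f =ᶠ[𝓝 x] g) (hg : x ∈ lipschitzLocus g) :
    x ∈ lipschitzLocus f := by
  obtain ⟨K, s, hs, hK⟩ := hg
  refine ⟨K, s ∩ {z | f z = g z}, inter_mem hs hfg, fun z hz w hw => ?_⟩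
  rw [hz.2, hw.2]
  exact hK hz.1 hw.1

variable {E F G : Type*} [NormedAddCommGroup E] [NormedSpace ℝ E]
  [NormedAddCommGroup F] [NormedSpace ℝ F] [NormedAddCommGroup G] [NormedSpace ℝ G]

theorem mem_lipschitzLocus_of_contDiff_prodMk {u : E → F} {x : E} (hx : x ∈ lipschitzLocus u)
    {Φ : E × F → G} (hΦ : ContDiff ℝ 1 Φ) : x ∈ lipschitzLocus fun z => Φ (z, u z) := by
  obtain ⟨K, s, hs, hu⟩ := hx
  obtain ⟨K', t, ht, hΦt⟩ := (hΦ.contDiffAt (x := (x, u x))).exists_lipschitzOnWith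
  have hcont : ContinuousAt (fun z => (z, u z)) x :=
    continuousAt_id.prodMk (hu.continuousOn.continuousAt hs)
  exact ⟨_, _, inter_mem hs (hcont.preimage_mem_nhds ht),
    hΦt.comp (LipschitzWith.id.lipschitzOnWith.prodMk (hu.mono inter_subset_left)) fun z hz => hz.2⟩

variable [FiniteDimensional ℝ E]

theorem exists_lipschitzWith_of_hasCompactSupport {u : E → F} (hu : Differentiable ℝ u)
    (hsupp : HasCompactSupport u) (hloc : LocallyLipschitz u) : ∃ K, LipschitzWith K u := by
  have : ProperSpace E := FiniteDimensional.proper ℝ E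
  obtain ⟨L, hL, hsuppL⟩ := exists_compact_superset hsupp.isCompact
  obtain ⟨K, hK⟩ := LocallyLipschitzOn.exists_lipschitzOnWith_of_compact hL
    hloc.locallyLipschitzOn
  refine ⟨K, lipschitzWith_of_nnnorm_fderiv_le hu fun x => ?_⟩
  by_cases hx : x ∈ tsupport u
  · exact norm_fderiv_le_of_lipschitzOn ℝ (mem_interior_iff_mem_nhds.1 (hsuppL hx)) hK
  · rw [fderiv_of_notMem_tsupport (𝕜 := ℝ) hx, nnnorm_zero]
    exact zero_le

theorem exists_lipschitzWith_eventuallyEq_nhdsSet {u : E → F} (hu : Differentiable ℝ u)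
    (hsupp : HasCompactSupport u) {S : Set E} (hS : IsCompact S) (hSu : S ⊆ lipschitzLocus u)
    {c : ℝ} (hc : 0 < c) :
    ∃ v : E → F, Differentiable ℝ v ∧ HasCompactSupport v ∧ (∃ K, LipschitzWith K v) ∧
      v =ᶠ[𝓝ˢ S] u ∧ ∀ x, ‖v x - u x‖ < c := by
  have : ProperSpace E := FiniteDimensional.proper ℝ E
  obtain ⟨P, hP, hPu, hPsupp⟩ := hu.continuous.exists_contDiff_approx 1
    (continuous_const (y := c)) fun _ => hc
  obtain ⟨L, hL, hSL, hLu⟩ := exists_compact_between hS (isOpen_lipschitzLocus u) hSu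
  obtain ⟨χ, hχS, hχL, hχ01⟩ := exists_contMDiffMap_one_nhds_of_subset_interior (n := 1)
    𝓘(ℝ, E) hS.isClosed hSL
  have hχ : ContDiff ℝ 1 χ := χ.contMDiff.contDiff
  let v : E → F := fun x => P x + χ x • (u x - P x)
  have hv : Differentiable ℝ v :=
    (hP.differentiable one_ne_zero).add
      ((hχ.differentiable one_ne_zero).smul (hu.sub (hP.differentiable one_ne_zero)))
  have hvsupp : HasCompactSupport v := by
    have hPsupp' : HasCompactSupport P := hsupp.mono hPsupp
    exact hPsupp'.add (hsupp.sub hPsupp').smul_left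
  have hvloc : LocallyLipschitz v := by
    intro x
    by_cases hx : x ∈ L
    · exact mem_lipschitzLocus_of_contDiff_prodMk (hLu hx)
        (Φ := fun p => P p.1 + χ p.1 • (p.2 - P p.1)) (by fun_prop)
    · refine mem_lipschitzLocus_congr ?_ (hP.locallyLipschitz x)
      filter_upwards [hL.isClosed.isOpen_compl.mem_nhds hx] with z hz
      simp [v, hχL z hz]
  refine ⟨v, hv, hvsupp, exists_lipschitzWith_of_hasCompactSupport hv hvsupp hvloc, ?_, fun x => ?_⟩
  · filter_upwards [hχS] with x hx
    simp [v, hx]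
  · have hvu : v x - u x = (1 - χ x) • (P x - u x) := by simp only [v]; module
    rw [hvu, norm_smul, Real.norm_of_nonneg (sub_nonneg.2 (hχ01 x).2)]
    exact (mul_le_of_le_one_left (norm_nonneg _) (sub_le_self _ (hχ01 x).1)).trans_lt
      (by simpa [dist_eq_norm] using hPu x)

theorem isProperMap_id_add {u : E → E} (hu : Continuous u) (hsupp : HasCompactSupport u) :
    IsProperMap fun x => x + u x := by
  have : ProperSpace E := FiniteDimensional.proper ℝ E
  refine isProperMap_iff_isCompact_preimage.2 ⟨by fun_prop, fun S hS => ?_⟩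
  refine (hsupp.isCompact.union hS).of_isClosed_subset (hS.isClosed.preimage (by fun_prop)) ?_
  intro x hx
  by_cases hxu : x ∈ tsupport u
  · exact .inl hxu
  · right
    simpa [image_eq_zero_of_notMem_tsupport hxu] using hx

theorem exists_mem_det_id_add_fderiv_pos {u : E → E} (hu : Differentiable ℝ u)
    (hsupp : HasCompactSupport u) {y : E} {O : Set E} (hO : IsOpen O)
    (hfibre : ∀ x, x + u x = y → x ∈ O ∩ lipschitzLocus u) :
    ∃ x ∈ O, 0 < (.id ℝ E + fderiv ℝ u x : E →L[ℝ] E).det := by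
  have : ProperSpace E := FiniteDimensional.proper ℝ E
  have hproper := isProperMap_id_add hu.continuous hsupp
  obtain ⟨L, hL, hfibreL, hLO⟩ := exists_compact_between
    (hproper.isCompact_preimage isCompact_singleton) (hO.inter (isOpen_lipschitzLocus u)) hfibre
  obtain ⟨δ, hδ, hnear⟩ : ∃ δ > 0, ∀ x, dist (x + u x) y < δ → x ∈ L := by
    have hL_mem := hproper.isClosedMap.comap_nhds_le (subset_interior_iff_mem_nhdsSet.1 hfibreL)
    obtain ⟨δ, hδ, hball⟩ := (nhds_basis_ball.comap _).mem_iff.1 hL_mem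
    exact ⟨δ, hδ, fun x hx => hball hx⟩
  obtain ⟨v, hv, hvsupp, ⟨K, hK⟩, hvu, hvu_lt⟩ := exists_lipschitzWith_eventuallyEq_nhdsSet hu hsupp
    hL (fun x hx => (hLO hx).2) (half_pos hδ)
  obtain ⟨x, hx, hdet⟩ := exists_id_add_mem_and_det_pos hK hv hvsupp isOpen_ball
    (nonempty_ball.2 (half_pos hδ) : (ball y (δ / 2)).Nonempty)
  have hdist : dist (x + u x) (x + v x) < δ / 2 := by
    rw [dist_add_left, dist_comm, dist_eq_norm]
    exact hvu_lt x
  have hxL : x ∈ L := hnear x <| by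
    linarith [dist_triangle (x + u x) (x + v x) y, mem_ball.1 hx]
  rw [(hvu.filter_mono (nhds_le_nhdsSet hxL)).fderiv_eq] at hdet
  exact ⟨x, (hLO hxL).1, hdet⟩

end LipschitzLocus

section BaireCategory

theorem dense_setOf_forall_mem_imp_mem_interior {X ι : Type*} [TopologicalSpace X] [BaireSpace X]
    [Countable ι] {C : ι → Set X} (hC : ∀ i, IsClosed (C i)) :
    Dense {x | ∀ i, x ∈ C i → x ∈ interior (C i)} := by
  have hdense : Dense (⋂ i, (frontier (C i))ᶜ) :=
    dense_iInter_of_isOpen (fun i => isClosed_frontier.isOpen_compl) fun i =>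
      interior_eq_empty_iff_dense_compl.1 (interior_frontier (hC i))
  refine hdense.mono fun x hx i hxi => ?_
  by_contra hxi'
  exact mem_iInter.1 hx i ⟨subset_closure hxi, hxi'⟩

/-- The points from which `f` expands distances by a factor at least `r`, up to distance `r`. One
parameter plays both roles so that the sets decrease in `r` and a sequence `r → 0` exhausts them. -/
def expansionLocus {X Y : Type*} [PseudoMetricSpace X] [PseudoMetricSpace Y] (f : X → Y) (r : ℝ) :
    Set X :=
  {x | ∀ z, dist z x < r → r * dist z x ≤ dist (f z) (f x)}

theorem antitone_expansionLocus {X Y : Type*} [PseudoMetricSpace X] [PseudoMetricSpace Y]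
    (f : X → Y) : Antitone (expansionLocus f) := fun _ _ hrr' _ hx z hz =>
  (mul_le_mul_of_nonneg_right hrr' dist_nonneg).trans (hx z (hz.trans_le hrr'))

theorem isClosed_expansionLocus {X Y : Type*} [PseudoMetricSpace X] [PseudoMetricSpace Y]
    {f : X → Y} (hf : Continuous f) (r : ℝ) : IsClosed (expansionLocus f r) := by
  simp only [expansionLocus, ofPred_forall]
  exact isClosed_iInter fun z => isClosed_imp (isOpen_lt (by fun_prop) (by fun_prop))
    (isClosed_le (by fun_prop) (by fun_prop))

theorem eq_of_mem_expansionLocus {X Y : Type*} [MetricSpace X] [PseudoMetricSpace Y]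
    {f : X → Y} {r : ℝ} {x z : X} (hx : x ∈ expansionLocus f r) (hz : dist z x < r)
    (hf : f z = f x) : z = x := by
  have hr : 0 < r := dist_nonneg.trans_lt hz
  have hle := hx z hz
  rw [hf, dist_self] at hle
  exact dist_le_zero.1 (nonpos_of_mul_nonpos_right hle hr)

theorem dense_setOf_forall_mem_expansionLocus_notMem {X Y : Type*} [MetricSpace X] [ProperSpace X]
    [MetricSpace Y] [BaireSpace Y] {f : X → Y} (hf : Continuous f) {s : Set X} (hs : IsClosed s)
    (hsint : interior s = ∅) :
    Dense {y | ∀ x, f x = y → ∀ r > 0, x ∈ expansionLocus f r → x ∉ s} := by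
  rcases isEmpty_or_nonempty X with _ | _
  · simp
  obtain ⟨q, hq⟩ := TopologicalSpace.exists_dense_seq X
  obtain ⟨r, -, hr, hr_lim⟩ := exists_seq_strictAnti_tendsto (0 : ℝ)
  let P : ℕ × ℕ → Set X := fun i => closedBall (q i.2) (r i.1 / 4) ∩ (s ∩ expansionLocus f (r i.1))
  have hfP : ∀ i, IsClosed (f '' P i) := fun i =>
    (((isCompact_closedBall _ _).inter_right
      (hs.inter (isClosed_expansionLocus hf _))).image hf).isClosed
  refine (dense_setOf_forall_mem_imp_mem_interior hfP).mono ?_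
  rintro y hy x rfl r₀ hr₀ hx hxs
  obtain ⟨m, hm⟩ : ∃ m, r m < r₀ := (hr_lim.eventually_lt_const hr₀).exists
  have hrm : 0 < r m / 4 := div_pos (hr m) four_pos
  obtain ⟨k, hk⟩ := hq.exists_dist_lt x hrm
  have hfx := hy (m, k) ⟨x, ⟨hk.le, hxs, antitone_expansionLocus f hm.le hx⟩, rfl⟩
  refine eq_empty_iff_forall_notMem.1 hsint x (mem_interior_iff_mem_nhds.2 ?_)
  -- Nearby points have their image in `f '' P (m, k)`, hence lie in `P (m, k)` by expansion.
  filter_upwards [hf.continuousAt (mem_interior_iff_mem_nhds.1 hfx),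
    ball_mem_nhds x hrm] with z ⟨x', ⟨hx'k, hx's, hx'⟩, hzx'⟩ hzx
  have hdist : dist z x' < r m := by
    linarith [dist_triangle z x x', dist_triangle_right x x' (q k), mem_ball.1 hzx, hk,
      mem_closedBall.1 hx'k]
  rwa [eq_of_mem_expansionLocus hx' hdist hzx'.symm]

variable {E F : Type*} [NormedAddCommGroup E] [NormedSpace ℝ E]
  [NormedAddCommGroup F] [NormedSpace ℝ F]

theorem norm_fderiv_sub_le {f : E → F} {x : E} (hf : DifferentiableAt ℝ f x) {A : E →L[ℝ] F}
    {ε : ℝ} (hε : 0 ≤ ε) (hA : ∀ᶠ z in 𝓝 x, ‖f z - f x - A (z - x)‖ ≤ ε * ‖z - x‖) :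
    ‖fderiv ℝ f x - A‖ ≤ ε := by
  refine (hf.hasFDerivAt.sub A.hasFDerivAt).le_of_lip' hε (hA.mono fun z hz => ?_)
  simpa [sub_sub_sub_comm] using hz

theorem exists_forall_norm_sub_le_of_denseRange {ι : Type*} {f : E → F} {x : E}
    (hf : DifferentiableAt ℝ f x) {q : ι → E →L[ℝ] F} (hq : DenseRange q) {ε : ℝ} (hε : 0 < ε) :
    ∃ k, ∀ᶠ z in 𝓝 x, ‖f z - f x - q k (z - x)‖ ≤ ε * ‖z - x‖ := by
  obtain ⟨k, hk⟩ := hq.exists_dist_lt (fderiv ℝ f x) (half_pos hε)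
  refine ⟨k, (hf.hasFDerivAt.isLittleO.bound (half_pos hε)).mono fun z hz => ?_⟩
  calc ‖f z - f x - q k (z - x)‖
      = ‖(f z - f x - fderiv ℝ f x (z - x)) + (fderiv ℝ f x - q k) (z - x)‖ := by simp
    _ ≤ ε / 2 * ‖z - x‖ + ε / 2 * ‖z - x‖ :=
      norm_add_le_of_le hz (ContinuousLinearMap.le_of_opNorm_le _ (dist_eq_norm _ (q k) ▸ hk.le) _)
    _ = ε * ‖z - x‖ := by ring

variable [FiniteDimensional ℝ E]

theorem exists_mem_expansionLocus_of_det_ne_zero {f : E → E} {L : E →L[ℝ] E} {x : E}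
    (hf : HasFDerivAt f L x) (hL : L.det ≠ 0) : ∃ r > 0, x ∈ expansionLocus f r := by
  have hinducing : IsInducing L :=
    (L.toContinuousLinearEquivOfDetNeZero hL).toHomeomorph.isInducing
  obtain ⟨C, hC, hbound⟩ := (hf.isTheta_sub hinducing).2.exists_pos
  obtain ⟨δ, hδ, hball⟩ := Metric.eventually_nhds_iff.1 hbound.bound
  refine ⟨min δ C⁻¹, by positivity, fun z hz => ?_⟩
  have hle := hball (hz.trans_le (min_le_left _ _))
  rw [← dist_eq_norm, ← dist_eq_norm] at hle
  calc min δ C⁻¹ * dist z x ≤ C⁻¹ * dist z x := by gcongr; exact min_le_right _ _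
    _ ≤ dist (f z) (f x) := (inv_mul_le_iff₀ hC).2 hle

theorem exists_continuousWithinAt_fderiv [SecondCountableTopology F] {f : E → F} {T : Set E}
    (hT : IsGδ T) (hTne : T.Nonempty) (hf : ∀ x ∈ T, DifferentiableAt ℝ f x) :
    ∃ x ∈ T, ContinuousWithinAt (fderiv ℝ f) T x := by
  have : ProperSpace E := FiniteDimensional.proper ℝ E
  have : BaireSpace T := hT.baireSpace_of_t2Space_locallyCompactSpace
  have : Nonempty T := hTne.to_subtype
  have hcont : Continuous fun x : T => f x := continuous_iff_continuousAt.2 fun x =>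
    (hf x x.2).continuousAt.comp continuousAt_subtype_val
  obtain ⟨q, hq⟩ := TopologicalSpace.exists_dense_seq (E →L[ℝ] F)
  obtain ⟨r, -, hr, hr_lim⟩ := exists_seq_strictAnti_tendsto (0 : ℝ)
  let C : ℕ × ℕ × ℕ → Set T := fun i => {x | ∀ z, dist z (x : E) < r i.1 →
    ‖f z - f x - q i.2.1 (z - x)‖ ≤ r i.2.2 * ‖z - x‖}
  have hC : ∀ i, IsClosed (C i) := fun i => by
    simp only [C, ofPred_forall]
    exact isClosed_iInter fun z => isClosed_imp (isOpen_lt (by fun_prop) (by fun_prop))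
      (isClosed_le ((continuous_const.sub hcont).sub
        ((q i.2.1).continuous.comp (by fun_prop))).norm (by fun_prop))
  have hCfderiv : ∀ i, ∀ x ∈ C i, dist (fderiv ℝ f x) (q i.2.1) ≤ r i.2.2 := fun i x hx =>
    (dist_eq_norm _ _).trans_le <| norm_fderiv_sub_le (hf x x.2) (hr _).le
      (mem_of_superset (ball_mem_nhds _ (hr i.1)) hx)
  obtain ⟨x, hx⟩ := (dense_setOf_forall_mem_imp_mem_interior hC).nonempty
  refine ⟨x, x.2, (continuousWithinAt_iff_continuousAt_domRestrict _ x.2).2 ?_⟩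
  refine Metric.continuousAt_iff'.2 fun ε hε => ?_
  obtain ⟨j, hj⟩ : ∃ j, r j < ε / 2 := (hr_lim.eventually_lt_const (half_pos hε)).exists
  obtain ⟨k, hk⟩ := exists_forall_norm_sub_le_of_denseRange (hf x x.2) hq (hr j)
  obtain ⟨δ, hδ, hball⟩ := Metric.eventually_nhds_iff.1 hk
  obtain ⟨m, hm⟩ : ∃ m, r m < δ := (hr_lim.eventually_lt_const hδ).exists
  have hxC : x ∈ C (m, k, j) := fun z hz => hball (hz.trans hm)
  filter_upwards [mem_interior_iff_mem_nhds.1 (hx _ hxC)] with z hz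
  have hzq := hCfderiv _ z hz
  have hxq := hCfderiv _ x hxC
  rw [domRestrict_apply, domRestrict_apply]
  calc dist (fderiv ℝ f z) (fderiv ℝ f x)
      ≤ dist (fderiv ℝ f z) (q k) + dist (fderiv ℝ f x) (q k) := dist_triangle_right _ _ _
    _ ≤ r j + r j := add_le_add hzq hxq
    _ < ε := by linarith

theorem dense_lipschitzLocus [SecondCountableTopology F] {f : E → F} (hf : Differentiable ℝ f) :
    Dense (lipschitzLocus f) := by
  refine dense_iff_inter_open.2 fun W hW hWne => ?_
  obtain ⟨x, hxW, hx⟩ := exists_continuousWithinAt_fderiv hW.isGδ hWne fun x _ => hf x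
  obtain ⟨K, s, hs, hK⟩ := (hasStrictFDerivAt_of_hasFDerivAt_of_continuousAt
    (.of_forall fun z => (hf z).hasFDerivAt)
    (hx.continuousAt (hW.mem_nhds hxW))).exists_lipschitzOnWith
  exact ⟨x, hxW, K, s, hs, hK⟩

theorem dense_setOf_forall_det_ne_zero_mem_lipschitzLocus {f : E → E} (hf : Differentiable ℝ f) :
    Dense {y | ∀ x, f x = y → (fderiv ℝ f x).det ≠ 0 → x ∈ lipschitzLocus f} := by
  have : ProperSpace E := FiniteDimensional.proper ℝ E
  have hinterior : interior (lipschitzLocus f)ᶜ = ∅ :=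
    interior_eq_empty_iff_dense_compl.2 (by simpa using dense_lipschitzLocus hf)
  refine (dense_setOf_forall_mem_expansionLocus_notMem hf.continuous
    (isOpen_lipschitzLocus f).isClosed_compl hinterior).mono fun y hy x hxy hdet => ?_
  obtain ⟨r, hr, hx⟩ := exists_mem_expansionLocus_of_det_ne_zero (hf x).hasFDerivAt hdet
  exact not_not.1 (hy x hxy r hr hx)

end BaireCategory

section LocalSign

variable {E F : Type*} [NormedAddCommGroup E] [NormedSpace ℝ E]
  [NormedAddCommGroup F] [NormedSpace ℝ F]

theorem differentiable_smul_of_tsupport {φ : E → ℝ} (hφ : Differentiable ℝ φ) {g : E → F}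
    (hg : ∀ x ∈ tsupport φ, DifferentiableAt ℝ g x) : Differentiable ℝ fun x => φ x • g x := by
  intro x
  by_cases hx : x ∈ tsupport φ
  · exact (hφ x).smul (hg x hx)
  · refine (differentiableAt_const (0 : F)).congr_of_eventuallyEq ?_
    filter_upwards [notMem_tsupport_iff_eventuallyEq.1 hx] with z hz
    simp [hz]

variable [FiniteDimensional ℝ E]

theorem exists_differentiable_hasCompactSupport_eqOn_ball {g : E → F} {p : E} {ρ r c : ℝ}
    (hρ : 0 < ρ) (hρr : ρ < r) (hg : DifferentiableOn ℝ g (ball p r))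
    (hgc : ∀ x ∈ ball p r, ‖g x‖ ≤ c) :
    ∃ w : E → F, Differentiable ℝ w ∧ HasCompactSupport w ∧ EqOn w g (ball p ρ) ∧
      ∀ x, ‖w x‖ ≤ c := by
  obtain ⟨R, hρR, hRr⟩ := exists_between hρr
  let ψ : ContDiffBump p := ⟨ρ, R, hρ, hρR⟩
  have hψr : tsupport ψ ⊆ ball p r := ψ.tsupport_eq.trans_subset (closedBall_subset_ball hRr)
  refine ⟨fun x => ψ x • g x, differentiable_smul_of_tsupport
    (ψ.contDiff.differentiable one_ne_zero) fun x hx =>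
      hg.differentiableAt (isOpen_ball.mem_nhds (hψr hx)), ψ.hasCompactSupport.smul_right,
    fun x hx => ?_, fun x => ?_⟩
  · simp [ψ.one_of_mem_closedBall (ball_subset_closedBall hx)]
  · by_cases hx : x ∈ tsupport ψ
    · rw [norm_smul, Real.norm_of_nonneg ψ.nonneg]
      exact (mul_le_of_le_one_left (norm_nonneg _) ψ.le_one).trans (hgc x (hψr hx))
    · simp only [image_eq_zero_of_notMem_tsupport hx, zero_smul, norm_zero]
      exact (norm_nonneg _).trans (hgc p (mem_ball_self (hρ.trans hρr)))

theorem exists_mem_ball_det_fderiv_nonneg {g : E → E} {p : E} {r : ℝ} (hr : 0 < r)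
    (hg : DifferentiableOn ℝ g (ball p r)) (hgid : ∀ x ∈ ball p r, ‖g x - x‖ ≤ r / 4) :
    ∃ x ∈ ball p r, 0 ≤ (fderiv ℝ g x).det := by
  by_contra! hneg
  obtain ⟨w, hw, hwsupp, hwg, hw_le⟩ := exists_differentiable_hasCompactSupport_eqOn_ball
    (half_pos hr) (half_lt_self hr) (hg.sub differentiableOn_id) hgid
  have hfderiv : ∀ x, fderiv ℝ (fun z => z + w z) x = .id ℝ E + fderiv ℝ w x := fun x =>
    ((hasFDerivAt_id x).add (hw x).hasFDerivAt).fderiv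
  have hdet : ∀ x ∈ ball p (r / 2), (.id ℝ E + fderiv ℝ w x : E →L[ℝ] E).det < 0 := by
    intro x hx
    have hgw : (fun z => z + w z) =ᶠ[𝓝 x] g := by
      filter_upwards [isOpen_ball.mem_nhds hx] with z hz
      simp [hwg hz]
    rw [← hfderiv, hgw.fderiv_eq]
    exact hneg x (ball_subset_ball (half_le_self hr.le) hx)
  obtain ⟨y, hy, hyr⟩ := (dense_setOf_forall_det_ne_zero_mem_lipschitzLocus
    (differentiable_id.add hw)).exists_dist_lt p (show 0 < r / 4 by positivity)
  have hfibre : ∀ x, x + w x = y → x ∈ ball p (r / 2) ∩ lipschitzLocus w := by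
    rintro x rfl
    have hx : x ∈ ball p (r / 2) := by
      have := dist_triangle_right x p (x + w x)
      rw [dist_self_add_right] at this
      exact mem_ball.2 (by linarith [hw_le x])
    have hlip : x ∈ lipschitzLocus fun z => z + w z :=
      hy x rfl (((congrArg ContinuousLinearMap.det (hfderiv x)).trans_lt (hdet x hx)).ne)
    refine ⟨hx, ?_⟩
    simpa using mem_lipschitzLocus_of_contDiff_prodMk hlip (Φ := fun q => q.2 - q.1) (by fun_prop)
  obtain ⟨x, hx, hpos⟩ := exists_mem_det_id_add_fderiv_pos hw hwsupp isOpen_ball hfibre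
  exact (hdet x hx).not_gt hpos

theorem eventually_exists_mem_ball_det_fderiv_nonneg {g : E → E} {x : E}
    (hg : HasFDerivAt g (.id ℝ E) x) :
    ∀ᶠ p in 𝓝[≠] x, DifferentiableOn ℝ g (ball p (dist p x)) →
      ∃ z ∈ ball p (dist p x), 0 ≤ (fderiv ℝ g z).det := by
  obtain ⟨δ, hδ, hball⟩ := Metric.eventually_nhds_iff.1
    (hg.isLittleO.bound (show (0 : ℝ) < 1 / 8 by norm_num))
  filter_upwards [self_mem_nhdsWithin, nhdsWithin_le_nhds (ball_mem_nhds x (half_pos hδ))]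
    with p hpx hpδ hdiff
  have hle : ∀ z ∈ ball p (dist p x), ‖g z - g x + x - z‖ ≤ dist p x / 4 := by
    intro z hz
    have hzx : dist z x < 2 * dist p x := by linarith [dist_triangle z p x, mem_ball.1 hz]
    calc ‖g z - g x + x - z‖ = ‖g z - g x - (z - x)‖ := by congr 1; abel
      _ ≤ 1 / 8 * ‖z - x‖ := hball (by linarith [mem_ball.1 hpδ])
      _ ≤ dist p x / 4 := by rw [← dist_eq_norm]; linarith
  simpa only [fderiv_add_const, fderiv_sub_const] using exists_mem_ball_det_fderiv_nonneg
    (dist_pos.2 hpx) ((hdiff.sub_const (g x)).add_const x) hle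

theorem eventually_exists_mem_ball_det_fderiv_mul_det_nonneg {f : E → E} {L : E →L[ℝ] E} {x : E}
    (hf : HasFDerivAt f L x) (hL : L.det ≠ 0) :
    ∀ᶠ p in 𝓝[≠] x, DifferentiableOn ℝ f (ball p (dist p x)) →
      ∃ z ∈ ball p (dist p x), 0 ≤ (fderiv ℝ f z).det * L.det := by
  let e := L.toContinuousLinearEquivOfDetNeZero hL
  have he : (e : E →L[ℝ] E) = L := L.coe_toContinuousLinearEquivOfDetNeZero hL
  have hid : HasFDerivAt (e.symm ∘ f) (.id ℝ E) x := by
    refine (e.symm.comp_hasFDerivAt_iff.2 hf).congr_fderiv ?_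
    rw [← he, ContinuousLinearEquiv.coe_symm_comp_coe]
  filter_upwards [eventually_exists_mem_ball_det_fderiv_nonneg hid] with p hp hdiff
  obtain ⟨z, hz, hdet⟩ := hp (e.symm.comp_differentiableOn_iff.2 hdiff)
  refine ⟨z, hz, ?_⟩
  have hdet_eq : (fderiv ℝ (e.symm ∘ f) z).det = L.det⁻¹ * (fderiv ℝ f z).det := by
    rw [e.symm.comp_fderiv, ← he, ← e.det_coe_symm]
    exact LinearMap.det_comp _ _
  calc 0 ≤ L.det ^ 2 * (L.det⁻¹ * (fderiv ℝ f z).det) := by rw [← hdet_eq]; positivity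
    _ = (fderiv ℝ f z).det * L.det := by field_simp

theorem exists_mem_ball_det_fderiv_mul_det_nonneg {f : E → E} {L : E →L[ℝ] E} {x b : E}
    (hf : HasFDerivAt f L x) (hL : L.det ≠ 0) (hbx : b ≠ x)
    (hdiff : DifferentiableOn ℝ f (ball b (dist b x))) :
    ∃ z ∈ ball b (dist b x), 0 ≤ (fderiv ℝ f z).det * L.det := by
  have hline : Tendsto (AffineMap.lineMap x b) (𝓝[>] (0 : ℝ)) (𝓝[≠] x) := by
    refine tendsto_nhdsWithin_iff.2 ⟨?_, ?_⟩
    · exact (AffineMap.lineMap_continuous.tendsto' 0 x (AffineMap.lineMap_apply_zero x b)).mono_left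
        nhdsWithin_le_nhds
    · filter_upwards [self_mem_nhdsWithin] with t ht
      simpa [AffineMap.lineMap_eq_left_iff] using ⟨hbx.symm, (mem_Ioi.1 ht).ne'⟩
  obtain ⟨t, ht, ht01⟩ := ((hline.eventually
    (eventually_exists_mem_ball_det_fderiv_mul_det_nonneg hf hL)).and
    (Ioo_mem_nhdsGT one_pos)).exists
  have hsub : ball (AffineMap.lineMap x b t) (dist (AffineMap.lineMap x b t) x) ⊆
      ball b (dist b x) := by
    refine ball_subset_ball' ?_
    rw [dist_lineMap_left, dist_lineMap_right, Real.norm_of_nonneg ht01.1.le,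
      Real.norm_of_nonneg (sub_nonneg.2 ht01.2.le), dist_comm b x]
    linarith
  obtain ⟨z, hz, hdet⟩ := ht (hdiff.mono hsub)
  exact ⟨z, hsub hz, hdet⟩

end LocalSign

section Darboux

theorem inter_frontier_nonempty_of_isPreconnected {X : Type*} [TopologicalSpace X] {U s : Set X}
    (hU : IsPreconnected U) (hUs : (U ∩ s).Nonempty) (hUs' : (U ∩ sᶜ).Nonempty) :
    (U ∩ frontier s).Nonempty := by
  rw [frontier_eq_closure_inter_closure]
  refine isPreconnected_closed_iff.1 hU _ _ isClosed_closure isClosed_closure (fun x _ => ?_)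
    (hUs.mono (inter_subset_inter_right _ subset_closure))
    (hUs'.mono (inter_subset_inter_right _ subset_closure))
  exact (em (x ∈ s)).imp (subset_closure ·) (subset_closure ·)

theorem exists_ball_subset_of_eventually_frontier_notMem {X : Type*} [PseudoMetricSpace X]
    [ProperSpace X] {s N : Set X} {x : X} (hx : x ∈ frontier s)
    (hxs : ∀ᶠ z in 𝓝 x, z ∈ frontier s → z ∉ s) (hN : N ∈ 𝓝 x) :
    ∃ x' ∈ N \ s, ∃ b ≠ x', ball b (dist b x') ⊆ N ∩ s := by
  obtain ⟨ε, hε, hball⟩ := Metric.mem_nhds_iff.1 (inter_mem hN hxs)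
  rw [frontier_eq_closure_inter_closure] at hx
  obtain ⟨b, hbs, hb⟩ := Metric.mem_closure_iff.1 hx.1 (ε / 2) (half_pos hε)
  obtain ⟨x', hx', hbx'⟩ := isClosed_closure.exists_infDist_eq_dist ⟨x, hx.2⟩ b
  have hbx'_le : dist b x' ≤ dist x b :=
    hbx'.symm.trans_le ((infDist_le_dist_of_mem hx.2).trans_eq (dist_comm b x))
  have hnear : closedBall b (dist b x') ⊆ N ∩ {z | z ∈ frontier s → z ∉ s} := fun z hz =>
    hball (mem_ball.2 (by linarith [dist_triangle_right z x b, mem_closedBall.1 hz]))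
  obtain ⟨hx'N, hx's⟩ : x' ∈ N ∩ sᶜ := by
    obtain ⟨hx'N, hfrontier⟩ := hnear (mem_closedBall'.2 le_rfl)
    have hx'int : x' ∉ interior s := by rwa [closure_compl] at hx'
    exact ⟨hx'N, fun hmem => hfrontier ⟨subset_closure hmem, hx'int⟩ hmem⟩
  have hsub : ball b (dist b x') ⊆ s := by
    rw [← hbx', infDist_closure]
    exact ball_infDist_compl_subset
  exact ⟨x', ⟨hx'N, hx's⟩, b, fun h => hx's (h ▸ hbs),
    subset_inter (ball_subset_closedBall.trans (hnear.trans inter_subset_left)) hsub⟩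

variable {E : Type*} [NormedAddCommGroup E] [NormedSpace ℝ E] [FiniteDimensional ℝ E]
  {U : Set E} {f : E → E}

theorem exists_det_fderiv_mul_det_fderiv_nonneg (hU : IsOpen U) (hf : DifferentiableOn ℝ f U)
    (hdet : ∀ x ∈ U, (fderiv ℝ f x).det ≠ 0) {s : Set E} {x : E} (hxU : x ∈ U)
    (hx : x ∈ frontier s) (hxs : ∀ᶠ z in 𝓝 x, z ∈ frontier s → z ∉ s) :
    ∃ z ∈ U ∩ s, ∃ x' ∈ U \ s, 0 ≤ (fderiv ℝ f z).det * (fderiv ℝ f x').det := by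
  have : ProperSpace E := FiniteDimensional.proper ℝ E
  obtain ⟨x', hx', b, hbx', hball⟩ :=
    exists_ball_subset_of_eventually_frontier_notMem hx hxs (hU.mem_nhds hxU)
  obtain ⟨z, hz, hnonneg⟩ := exists_mem_ball_det_fderiv_mul_det_nonneg
    (hf.differentiableAt (hU.mem_nhds hx'.1)).hasFDerivAt (hdet x' hx'.1) hbx'
    (hf.mono (hball.trans inter_subset_left))
  exact ⟨z, hball hz, x', hx', hnonneg⟩

theorem exists_det_fderiv_eq_zero (hU : IsOpen U) (hUconn : IsPreconnected U)
    (hf : DifferentiableOn ℝ f U) {x₀ x₁ : E} (hx₀ : x₀ ∈ U) (hx₁ : x₁ ∈ U)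
    (h₀ : (fderiv ℝ f x₀).det < 0) (h₁ : 0 < (fderiv ℝ f x₁).det) :
    ∃ x ∈ U, (fderiv ℝ f x).det = 0 := by
  by_contra! hne
  let s : Set E := {x | (fderiv ℝ f x).det < 0}
  obtain ⟨x, ⟨hxU, hxs⟩, hcont⟩ := exists_continuousWithinAt_fderiv
    (hU.isGδ.inter isClosed_frontier.isGδ)
    (inter_frontier_nonempty_of_isPreconnected (s := s) hUconn ⟨x₀, hx₀, h₀⟩ ⟨x₁, hx₁, h₁.not_gt⟩)
    fun x hx => hf.differentiableAt (hU.mem_nhds hx.1)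
  have hdet : ContinuousWithinAt (fun z => (fderiv ℝ f z).det) (frontier s) x := by
    rw [← continuousWithinAt_inter' (mem_nhdsWithin_of_mem_nhds (hU.mem_nhds hxU)), inter_comm]
    exact ContinuousLinearMap.continuous_det.continuousAt.comp_continuousWithinAt hcont
  rcases lt_or_gt_of_ne (hne x hxU) with hneg | hpos
  · have hfrontier : ∀ᶠ z in 𝓝 x, z ∈ frontier sᶜ → z ∉ sᶜ := by
      rw [frontier_compl]
      exact (eventually_nhdsWithin_iff.1 (hdet.eventually_lt_const hneg)).mono
        fun z hz hzs => not_not.2 (hz hzs)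
    obtain ⟨z, ⟨hzU, hz⟩, x', ⟨_, hx'⟩, hnonneg⟩ :=
      exists_det_fderiv_mul_det_fderiv_nonneg hU hf hne hxU (frontier_compl s ▸ hxs) hfrontier
    have hzpos : 0 < (fderiv ℝ f z).det := (hne z hzU).lt_of_le' (not_lt.1 hz)
    exact (mul_neg_of_pos_of_neg hzpos (not_not.1 hx')).not_ge hnonneg
  · have hfrontier : ∀ᶠ z in 𝓝 x, z ∈ frontier s → z ∉ s :=
      (eventually_nhdsWithin_iff.1 (hdet.eventually_const_lt hpos)).mono
        fun z hz hzs => (hz hzs).not_gt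
    obtain ⟨z, ⟨_, hz⟩, x', ⟨hx'U, hx'⟩, hnonneg⟩ :=
      exists_det_fderiv_mul_det_fderiv_nonneg hU hf hne hxU hxs hfrontier
    have hx'pos : 0 < (fderiv ℝ f x').det := (hne x' hx'U).lt_of_le' (not_lt.1 hx')
    exact (mul_neg_of_neg_of_pos hz hx'pos).not_ge hnonneg

theorem differentiable_darboux_general (hU : IsOpen U) (hUconn : IsPreconnected U)
    {f' : E → E →L[ℝ] E} (hf : ∀ x ∈ U, HasFDerivAt f (f' x) x) (A : E →L[ℝ] E) {x₀ x₁ : E}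
    (hx₀ : x₀ ∈ U) (hx₁ : x₁ ∈ U) (h₀ : (f' x₀ - A).det < 0) (h₁ : 0 < (f' x₁ - A).det) :
    ∃ x₂ ∈ U, (f' x₂ - A).det = 0 := by
  have hfA : ∀ x ∈ U, HasFDerivAt (fun z => f z - A z) (f' x - A) x := fun x hx =>
    (hf x hx).sub A.hasFDerivAt
  obtain ⟨x₂, hx₂, hdet⟩ := exists_det_fderiv_eq_zero hU hUconn
    (fun x hx => (hfA x hx).differentiableAt.differentiableWithinAt) hx₀ hx₁
    ((hfA x₀ hx₀).fderiv ▸ h₀) ((hfA x₁ hx₁).fderiv ▸ h₁)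
  exact ⟨x₂, hx₂, (hfA x₂ hx₂).fderiv ▸ hdet⟩

end Darboux

/-- Differentiable Darboux theorem: if `det (f' x₀ - α • id) < 0` and
`det (f' x₁ - α • id) > 0` then `det (f' x₂ - α • id) = 0` for some `x₂ ∈ U`. -/
theorem differentiable_darboux
    {n : ℕ} {U : Set (EuclideanSpace ℝ (Fin n))} (hU : IsOpen U) (hUconn : IsConnected U)
    (f : EuclideanSpace ℝ (Fin n) → EuclideanSpace ℝ (Fin n))
    (f' : EuclideanSpace ℝ (Fin n) → EuclideanSpace ℝ (Fin n) →L[ℝ] EuclideanSpace ℝ (Fin n))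
    (hf : ∀ x ∈ U, HasFDerivAt f (f' x) x)
    (α : ℝ) (x₀ x₁ : EuclideanSpace ℝ (Fin n)) (hx₀ : x₀ ∈ U) (hx₁ : x₁ ∈ U)
    (h₀ : (f' x₀ - α • ContinuousLinearMap.id ℝ (EuclideanSpace ℝ (Fin n))).det < 0)
    (h₁ : (f' x₁ - α • ContinuousLinearMap.id ℝ (EuclideanSpace ℝ (Fin n))).det > 0) :
    ∃ x₂ ∈ U, (f' x₂ - α • ContinuousLinearMap.id ℝ (EuclideanSpace ℝ (Fin n))).det = 0 :=
  differentiable_darboux_general hU hUconn.isPreconnected hf _ hx₀ hx₁ h₀ h₁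
end
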